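/- arXiv:1111.6157 — 11 statements merged into one kernel-verified Lean document; each statement's English description precedes it below -/
import Mathlib

section
/- Let v = x_a x_b (a < b) be a squarefree monomial of degree 2 in S, let I = (L^i(v)) be the initial lexsegment edge ideal it defines, let t ≥ 1 be an integer, and let G(I^t) = {u_1, …, u_m} be the minimal monomial generating set of I^t listed in decreasing lexicographic order u_1 >_lex ⋯ >_lex u_m. Then for every 2 ≤ i ≤ m, the colon ideal (u_1, …, u_{i-1}) : (u_i) equals the ideal generated by the variables x_r with 1 ≤ r ≤ max(u_i) − 1 and ν_r(u_i) ≤ t − 1. In particular, every power of an initial lexsegment edge ideal has linear quotients. -/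
/-!
The ideal `I` is the edge ideal of the graph `LexEdge a b`, which is closed under lowering an
endpoint: if `{M, q}` is an edge, `r < M` and `r ≠ q`, then `{r, q}` is an edge. The minimal
generators of `I ^ t` are exactly the products of `t` edges (`isMinMonGen_iff`), since these all
have degree `2 t`.

For `⊇` the point is the exchange lemma `exchange`: if `u` is a product of `t` edges with greatest
variable `x_M`, `r < M` and `ν_r(u) < t`, then `x_r u / x_M` is again a product of `t` edges. If
some edge contains `M` but not `r`, lower `M` to `r` in it. Otherwise `{M, r}` occurs, and as
`ν_r(u) < t` so does some edge `{c, d}` avoiding `r` and `M`; replace these two by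
`{r, c}` and `{r, d}`.

For `⊆`, both ideals are monomial. If a generator `u' >_lex u` divides `w u`, let `r` be the first
index where the exponents differ. Then `x_r` divides `w`, equality of degrees forces `r < M`, and
`ν_r(u) < ν_r(u') ≤ t`.
-/

open MvPolynomial


/-- `e >ₗₑₓ f` for exponent vectors: at the smallest index where they differ,
`e` has the larger exponent (variables ordered `x_1 > x_2 > ⋯ > x_n`). -/
def ExpLexGT {n : ℕ} (e f : Fin n →₀ ℕ) : Prop :=
  ∃ i : Fin n, (∀ j : Fin n, j < i → e j = f j) ∧ f i < e i

/-- `e ≥ₗₑₓ f`. -/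
def ExpLexGE {n : ℕ} (e f : Fin n →₀ ℕ) : Prop := ExpLexGT e f ∨ e = f

/-- The monomial `x^e` is a minimal monomial generator of the monomial ideal `J`:
it lies in `J` and dividing it by any variable takes it out of `J`. -/
def IsMinMonGen {K : Type} [Field K] {n : ℕ} (J : Ideal (MvPolynomial (Fin n) K))
    (e : Fin n →₀ ℕ) : Prop :=
  monomial e (1 : K) ∈ J ∧
    ∀ (i : Fin n) (w : MvPolynomial (Fin n) K), w * X i = monomial e (1 : K) → w ∉ J

/-- The graph whose edge ideal is `(L^i(x_a x_b))`, as a symmetric relation: the endpoints are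
distinct, and the smaller one is below `a`, or equals `a` while the larger one is at most `b`. -/
def LexEdge {n : ℕ} (a b i j : Fin n) : Prop :=
  (i < j ∧ (i < a ∨ i = a ∧ j ≤ b)) ∨ (j < i ∧ (j < a ∨ j = a ∧ i ≤ b))

theorem LexEdge.symm {n : ℕ} {a b i j : Fin n} (h : LexEdge a b i j) : LexEdge a b j i :=
  Or.symm h

theorem LexEdge.ne {n : ℕ} {a b i j : Fin n} (h : LexEdge a b i j) : i ≠ j := by
  unfold LexEdge at h; grind

/-- Lowering an endpoint of an edge gives an edge, unless the endpoints collide. -/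
theorem LexEdge.lower {n : ℕ} {a b M q r : Fin n} (h : LexEdge a b M q) (hr : r < M)
    (hq : r ≠ q) : LexEdge a b r q := by
  unfold LexEdge at *; grind

/-- The exponent vectors of the edges of `LexEdge a b`. -/
def edgeExps {n : ℕ} (a b : Fin n) : Set (Fin n →₀ ℕ) :=
  {e | ∃ i j, LexEdge a b i j ∧ e = Finsupp.single i 1 + Finsupp.single j 1}

/-- The generating set of the initial lexsegment edge ideal is the edge set of `LexEdge a b`. -/
theorem lexsegment_eq_edgeExps {n : ℕ} (a b : Fin n) (hab : a < b) :
    {e : Fin n →₀ ℕ | (∀ i : Fin n, e i ≤ 1) ∧ (∑ i : Fin n, e i) = 2 ∧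
        ExpLexGE e (Finsupp.single a 1 + Finsupp.single b 1)} = edgeExps a b := by
  have key : ∀ i j : Fin n, i < j →
      (ExpLexGE (Finsupp.single i 1 + Finsupp.single j 1)
        (Finsupp.single a 1 + Finsupp.single b 1) ↔ (i < a ∨ i = a ∧ j ≤ b)) := by
    intro i j hij
    constructor
    · rintro (⟨k, hk, hlt⟩ | h)
      · simp only [Finsupp.add_apply, Finsupp.single_apply] at hk hlt
        have h1 := hk a
        have h2 := hk b
        have h3 := hk i
        have h4 := hk j
        have hkij : k = i ∨ k = j := by
          by_contra! h
          simp [h.1.symm, h.2.symm] at hlt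
        rcases hkij with rfl | rfl <;> grind (splits := 20)
      · have h1 := DFunLike.congr_fun h i
        have h2 := DFunLike.congr_fun h j
        simp only [Finsupp.add_apply, Finsupp.single_apply] at h1 h2
        grind
    · rintro (h | ⟨rfl, h⟩)
      · left
        refine ⟨i, fun k hk => ?_, ?_⟩ <;> simp only [Finsupp.add_apply, Finsupp.single_apply] <;>
          grind
      · rcases h.lt_or_eq with h | rfl
        · left
          refine ⟨j, fun k hk => ?_, ?_⟩ <;>
            simp only [Finsupp.add_apply, Finsupp.single_apply] <;> grind
        · exact Or.inr rfl
  ext e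
  constructor
  · rintro ⟨h1, h2, h3⟩
    have hcard : (Finset.univ.filter fun i => e i = 1).card = 2 := by
      rw [Finset.card_filter, ← h2]
      exact Finset.sum_congr rfl fun i _ => by have := h1 i; split_ifs <;> omega
    obtain ⟨i, j, hij, hs⟩ := Finset.card_eq_two.mp hcard
    have hmem : ∀ k, e k = 1 ↔ k = i ∨ k = j := fun k => by
      have := Finset.ext_iff.mp hs k
      simpa using this
    have he : e = Finsupp.single i 1 + Finsupp.single j 1 := by
      ext k
      have := hmem k
      have := h1 k
      simp only [Finsupp.add_apply, Finsupp.single_apply]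
      grind
    rcases lt_or_gt_of_ne hij with h | h
    · exact ⟨i, j, Or.inl ⟨h, (key i j h).mp (he ▸ h3)⟩, he⟩
    · refine ⟨i, j, Or.inr ⟨h, (key j i h).mp ?_⟩, he⟩
      rw [add_comm]
      exact he ▸ h3
  · rintro ⟨i, j, hE, rfl⟩
    refine ⟨fun k => ?_, ?_, ?_⟩
    · have := hE.ne
      simp only [Finsupp.add_apply, Finsupp.single_apply]
      grind
    · simp [Finset.sum_add_distrib, Finsupp.single_apply]
    · rcases hE with ⟨h, h'⟩ | ⟨h, h'⟩
      · exact (key i j h).mpr h'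
      · rw [add_comm]
        exact (key j i h).mpr h'

/-- The exponent vectors of the products of `t` edges, with repetition allowed. -/
def powExps {n : ℕ} (a b : Fin n) (t : ℕ) : Set (Fin n →₀ ℕ) :=
  {e | ∃ m : Multiset (Fin n →₀ ℕ), m.card = t ∧ (∀ x ∈ m, x ∈ edgeExps a b) ∧ m.sum = e}

theorem span_pow_eq {K : Type} [Field K] {n : ℕ} (a b : Fin n) (t : ℕ) :
    (Ideal.span ((fun e : Fin n →₀ ℕ => monomial e (1 : K)) '' edgeExps a b)) ^ t =
      Ideal.span ((fun e : Fin n →₀ ℕ => monomial e (1 : K)) '' powExps a b t) := by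
  induction t with
  | zero =>
    rw [pow_zero, Ideal.one_eq_top, eq_comm, Ideal.eq_top_iff_one]
    exact Ideal.subset_span ⟨0, ⟨0, by simp⟩, rfl⟩
  | succ t ih =>
    rw [pow_succ', ih, Ideal.span_mul_span']
    congr 1
    ext w
    simp only [Set.mem_mul, Set.mem_image]
    constructor
    · rintro ⟨_, ⟨x, hx, rfl⟩, _, ⟨_, ⟨m, hm, hmE, rfl⟩, rfl⟩, rfl⟩
      refine ⟨x + m.sum, ⟨x ::ₘ m, by simp [hm], ?_, by simp⟩, by simp [monomial_mul]⟩
      simpa using ⟨hx, hmE⟩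
    · rintro ⟨_, ⟨m, hm, hmE, rfl⟩, rfl⟩
      obtain ⟨x, hx⟩ := Multiset.card_pos_iff_exists_mem.mp (by omega : 0 < m.card)
      obtain ⟨m', rfl⟩ := Multiset.exists_cons_of_mem hx
      have hm' : m'.card = t := by simpa using hm
      exact ⟨_, ⟨x, hmE x (by simp), rfl⟩, _,
        ⟨m'.sum, ⟨m', hm', fun y hy => hmE y (by simp [hy]), rfl⟩, rfl⟩, by simp [monomial_mul]⟩

theorem edgeExps_degree {n : ℕ} {a b : Fin n} {x : Fin n →₀ ℕ} (hx : x ∈ edgeExps a b) :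
    x.degree = 2 := by
  obtain ⟨i, j, _, rfl⟩ := hx
  simp

theorem edgeExps_le_one {n : ℕ} {a b : Fin n} {x : Fin n →₀ ℕ} (hx : x ∈ edgeExps a b)
    (r : Fin n) : x r ≤ 1 := by
  obtain ⟨i, j, h, rfl⟩ := hx
  have := h.ne
  simp only [Finsupp.add_apply, Finsupp.single_apply]
  grind

theorem powExps_degree {n : ℕ} {a b : Fin n} {t : ℕ} {e : Fin n →₀ ℕ}
    (he : e ∈ powExps a b t) : e.degree = 2 * t := by
  obtain ⟨m, rfl, hE, rfl⟩ := he
  induction m using Multiset.induction with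
  | empty => simp
  | cons x m ih =>
    have h1 := edgeExps_degree (hE x (by simp))
    have h2 := ih fun y hy => hE y (by simp [hy])
    rw [Multiset.sum_cons, map_add, h1, h2, Multiset.card_cons]
    ring

theorem powExps_le {n : ℕ} {a b : Fin n} {t : ℕ} {e : Fin n →₀ ℕ}
    (he : e ∈ powExps a b t) (r : Fin n) : e r ≤ t := by
  obtain ⟨m, rfl, hE, rfl⟩ := he
  induction m using Multiset.induction with
  | empty => simp
  | cons x m ih =>
    have h1 := edgeExps_le_one (hE x (by simp)) r
    have h2 := ih fun y hy => hE y (by simp [hy])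
    rw [Multiset.sum_cons, Finsupp.add_apply, Multiset.card_cons]
    omega

theorem exists_mem_ne_zero {n : ℕ} {m : Multiset (Fin n →₀ ℕ)} {M : Fin n}
    (h : m.sum M ≠ 0) : ∃ x ∈ m, x M ≠ 0 := by
  induction m using Multiset.induction with
  | empty => simp at h
  | cons x m ih =>
    by_cases hx : x M = 0
    · rw [Multiset.sum_cons, Finsupp.add_apply, hx, zero_add] at h
      obtain ⟨y, hy, hyM⟩ := ih h
      exact ⟨y, by simp [hy], hyM⟩
    · exact ⟨x, by simp, hx⟩

theorem exists_mem_eq_zero {n : ℕ} {m : Multiset (Fin n →₀ ℕ)} {r : Fin n}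
    (h : m.sum r < m.card) : ∃ x ∈ m, x r = 0 := by
  induction m using Multiset.induction with
  | empty => simp at h
  | cons x m ih =>
    by_cases hx : x r = 0
    · exact ⟨x, by simp, hx⟩
    · rw [Multiset.sum_cons, Finsupp.add_apply, Multiset.card_cons] at h
      obtain ⟨y, hy, hyM⟩ := ih (by omega)
      exact ⟨y, by simp [hy], hyM⟩

/-- An edge through `M` has the form `{M, q}`. -/
theorem edgeExps_through {n : ℕ} {a b : Fin n} {x : Fin n →₀ ℕ} (hx : x ∈ edgeExps a b)
    {M : Fin n} (hM : x M ≠ 0) :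
    ∃ q, LexEdge a b M q ∧ x = Finsupp.single M 1 + Finsupp.single q 1 := by
  obtain ⟨i, j, h, rfl⟩ := hx
  by_cases hi : i = M
  · exact ⟨j, hi ▸ h, by rw [hi]⟩
  · have hj : j = M := by
      by_contra hj
      simp [hi, hj] at hM
    exact ⟨i, hj ▸ h.symm, by rw [hj, add_comm]⟩

/-- Exchange when some edge of the product contains `M` but not `r`. -/
theorem exchange_of_edge {n : ℕ} {a b : Fin n} {m : Multiset (Fin n →₀ ℕ)}
    (hE : ∀ x ∈ m, x ∈ edgeExps a b) {M r : Fin n} (hr : r < M)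
    {x : Fin n →₀ ℕ} (hx : x ∈ m) (hxM : x M ≠ 0) (hxr : x r = 0) :
    ∃ f ∈ powExps a b m.card, f + Finsupp.single M 1 = m.sum + Finsupp.single r 1 := by
  obtain ⟨m', rfl⟩ := Multiset.exists_cons_of_mem hx
  obtain ⟨q, hq, rfl⟩ := edgeExps_through (hE x hx) hxM
  have hrq : r ≠ q := by
    rintro rfl
    simp at hxr
  refine ⟨_, ⟨(Finsupp.single r 1 + Finsupp.single q 1) ::ₘ m', by simp, ?_, rfl⟩, ?_⟩
  · intro y hy
    rcases Multiset.mem_cons.mp hy with rfl | hy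
    · exact ⟨r, q, hq.lower hr hrq, rfl⟩
    · exact hE y (by simp [hy])
  · simp only [Multiset.sum_cons]
    abel

/-- If `u = x^e` is a product of `t` edges with greatest variable `x_M`, `r < M` and
`ν_r(u) < t`, then `x_r u / x_M` is a product of `t` edges. -/
theorem exchange {n : ℕ} {a b : Fin n} {t : ℕ} {e : Fin n →₀ ℕ}
    (he : e ∈ powExps a b t) {M r : Fin n} (hM : e M ≠ 0) (hMmax : ∀ j, e j ≠ 0 → j ≤ M)
    (hr : r < M) (hrt : e r < t) :
    ∃ f ∈ powExps a b t, f + Finsupp.single M 1 = e + Finsupp.single r 1 := by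
  obtain ⟨m, rfl, hE, rfl⟩ := he
  obtain ⟨x, hx, hxM⟩ := exists_mem_ne_zero hM
  by_cases hxr : x r = 0
  · exact exchange_of_edge hE hr hx hxM hxr
  obtain ⟨y, hy, hyr⟩ := exists_mem_eq_zero hrt
  by_cases hyM : y M ≠ 0
  · exact exchange_of_edge hE hr hy hyM hyr
  push Not at hyM
  obtain ⟨m', rfl⟩ := Multiset.exists_cons_of_mem hx
  have hym : y ∈ m' := (Multiset.mem_cons.mp hy).resolve_left fun h => hxr (h ▸ hyr)
  obtain ⟨m'', rfl⟩ := Multiset.exists_cons_of_mem hym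
  -- Here `x = {M, r}`, while `y = {c, d}` avoids both `M` and `r`.
  obtain ⟨q, hq, rfl⟩ := edgeExps_through (hE x hx) hxM
  have hqr : q = r := by
    by_contra h
    simp [h, hr.ne'] at hxr
  subst hqr
  obtain ⟨c, d, hcd, rfl⟩ := hE y hy
  simp only [Finsupp.add_apply, Finsupp.single_apply] at hyr hyM
  have hc : c < M := lt_of_le_of_ne (hMmax c (by simp)) (by grind)
  have hd : d < M := lt_of_le_of_ne (hMmax d (by simp)) (by grind)
  refine ⟨_, ⟨(Finsupp.single q 1 + Finsupp.single c 1) ::ₘ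
    (Finsupp.single q 1 + Finsupp.single d 1) ::ₘ m'', by simp, ?_, rfl⟩, ?_⟩
  · intro z hz
    rcases Multiset.mem_cons.mp hz with rfl | hz
    · exact ⟨q, c, (hq.lower hc (by grind)).symm, rfl⟩
    rcases Multiset.mem_cons.mp hz with rfl | hz
    · exact ⟨q, d, (hq.lower hd (by grind)).symm, rfl⟩
    · exact hE z (by simp [hz])
  · simp only [Multiset.sum_cons]
    abel

/-- The minimal monomial generators of `I ^ t` are the products of `t` edges. -/
theorem isMinMonGen_iff {K : Type} [Field K] {n : ℕ} (a b : Fin n) (t : ℕ) (f : Fin n →₀ ℕ) :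
    IsMinMonGen ((Ideal.span ((fun e : Fin n →₀ ℕ => monomial e (1 : K)) '' edgeExps a b)) ^ t) f
      ↔ f ∈ powExps a b t := by
  rw [span_pow_eq]
  constructor
  · rintro ⟨h1, h2⟩
    obtain ⟨s, hs, hsf⟩ := mem_ideal_span_monomial_image.mp h1 f (by simp)
    by_cases hne : s = f
    · exact hne ▸ hs
    exfalso
    obtain ⟨i, hi⟩ : ∃ i, s i < f i := by
      by_contra! h
      exact hne (le_antisymm hsf h)
    have hif : Finsupp.single i 1 ≤ f := by
      rw [Finsupp.single_le_iff]
      omega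
    refine h2 i (monomial (f - Finsupp.single i 1) 1) ?_ ?_
    · rw [X, monomial_mul, tsub_add_cancel_of_le hif, one_mul]
    · refine mem_ideal_span_monomial_image.mpr fun z hz => ⟨s, hs, ?_⟩
      have hz' : z = f - Finsupp.single i 1 := by
        simpa [eq_comm] using hz
      subst hz'
      intro k
      have := hsf k
      simp only [Finsupp.tsub_apply, Finsupp.single_apply]
      grind
  · intro hf
    refine ⟨Ideal.subset_span ⟨f, hf, rfl⟩, fun i w hw hwI => ?_⟩
    have hw0 : w ≠ 0 := by
      rintro rfl
      rw [zero_mul] at hw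
      exact one_ne_zero (monomial_eq_zero.mp hw.symm)
    obtain ⟨z, hz⟩ := support_nonempty.mpr hw0
    obtain ⟨s, hs, hsz⟩ := mem_ideal_span_monomial_image.mp hwI z hz
    have hzf : f = z + Finsupp.single i 1 := by
      have h := congrArg (coeff (z + Finsupp.single i 1)) hw
      rw [coeff_mul_X, coeff_monomial] at h
      by_contra hne
      rw [if_neg hne] at h
      exact mem_support_iff.mp hz h
    have h1 := powExps_degree hf
    have h2 := powExps_degree hs
    have h3 := Finsupp.degree_mono hsz
    rw [hzf, map_add, Finsupp.degree_single] at h1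
    omega

/-- For the initial lexsegment edge ideal `I = (L^i(x_a x_b))`, a power `I^t`, and a
minimal monomial generator `u = x^e` of `I^t` with greatest variable `x_M`, the colon
ideal of the (lex-)earlier minimal generators by `u` is generated by the variables
`x_r` with `r < M` and `ν_r(u) ≤ t - 1`.  (In particular `I^t` has linear quotients.) -/
theorem stmt_0 {K : Type} [Field K] {n : ℕ} (a b : Fin n) (hab : a < b)
    (I : Ideal (MvPolynomial (Fin n) K))
    (hI : I = Ideal.span ((fun e : Fin n →₀ ℕ => monomial e (1 : K)) ''
      {e : Fin n →₀ ℕ | (∀ i : Fin n, e i ≤ 1) ∧ (∑ i : Fin n, e i) = 2 ∧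
        ExpLexGE e (Finsupp.single a 1 + Finsupp.single b 1)}))
    (t : ℕ) (ht : 1 ≤ t)
    (e : Fin n →₀ ℕ) (he : IsMinMonGen (I ^ t) e)
    (M : Fin n) (hM : e M ≠ 0) (hMmax : ∀ j : Fin n, e j ≠ 0 → j ≤ M) :
    Submodule.colon
      (Ideal.span {w : MvPolynomial (Fin n) K |
        ∃ f : Fin n →₀ ℕ, IsMinMonGen (I ^ t) f ∧ ExpLexGT f e ∧ w = monomial f (1 : K)})
      (Ideal.span {monomial e (1 : K)}) =
    Ideal.span {w : MvPolynomial (Fin n) K |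
      ∃ r : Fin n, r < M ∧ e r + 1 ≤ t ∧ w = X r} := by
  rw [lexsegment_eq_edgeExps a b hab] at hI
  subst hI
  simp only [isMinMonGen_iff] at he ⊢
  have hgens : {w : MvPolynomial (Fin n) K |
        ∃ f : Fin n →₀ ℕ, f ∈ powExps a b t ∧ ExpLexGT f e ∧ w = monomial f (1 : K)} =
      (fun f : Fin n →₀ ℕ => monomial f (1 : K)) '' {f | f ∈ powExps a b t ∧ ExpLexGT f e} := by
    ext w
    simp only [Set.mem_ofPred_eq, Set.mem_image]
    grind
  have hvars : {w : MvPolynomial (Fin n) K | ∃ r : Fin n, r < M ∧ e r + 1 ≤ t ∧ w = X r} =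
      (X : Fin n → MvPolynomial (Fin n) K) '' {r | r < M ∧ e r + 1 ≤ t} := by
    ext w
    simp only [Set.mem_ofPred_eq, Set.mem_image]
    grind
  rw [hgens, hvars]
  apply le_antisymm
  · intro p hp
    have hpe : p * monomial e (1 : K) ∈ Ideal.span
        ((fun f : Fin n →₀ ℕ => monomial f (1 : K)) '' {f | f ∈ powExps a b t ∧ ExpLexGT f e}) :=
      Submodule.mem_colon.mp hp _ (Ideal.subset_span rfl)
    refine mem_ideal_span_X_image.mpr fun z hz => ?_
    obtain ⟨f, ⟨hf, r, hlt, hr⟩, hle⟩ := mem_ideal_span_monomial_image.mp hpe (z + e) (by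
      rw [mem_support_iff, coeff_mul_monomial, mul_one]
      exact mem_support_iff.mp hz)
    have hzr := hle r
    have hft := powExps_le hf r
    rw [Finsupp.add_apply] at hzr
    refine ⟨r, ⟨?_, by omega⟩, by omega⟩
    -- If `M ≤ r`, then `e` vanishes beyond `r`, so `e < f` and their degrees would differ.
    by_contra! hMr
    have hef : e.degree < f.degree := by
      rw [Finsupp.degree_eq_sum, Finsupp.degree_eq_sum]
      refine Finset.sum_lt_sum (fun k _ => ?_) ⟨r, Finset.mem_univ r, hr⟩
      rcases lt_trichotomy k r with h | rfl | h
      · exact (hlt k h).ge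
      · exact hr.le
      · by_contra hk
        exact absurd (hMmax k (by omega)) (not_le.mpr (hMr.trans_lt h))
    rw [powExps_degree hf, powExps_degree he] at hef
    exact lt_irrefl _ hef
  · rw [Ideal.span_le]
    rintro _ ⟨r, ⟨hrM, hrt⟩, rfl⟩
    obtain ⟨f, hf, hfe⟩ := exchange he hM hMmax hrM hrt
    have hfgt : ExpLexGT f e := by
      refine ⟨r, fun j hj => ?_, ?_⟩
      · have h := DFunLike.congr_fun hfe j
        simpa [Finsupp.single_apply, hj.ne', (hj.trans hrM).ne'] using h
      · have h := DFunLike.congr_fun hfe r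
        simp [hrM.ne'] at h
        omega
    refine Submodule.mem_colon.mpr fun q hq => ?_
    obtain ⟨c, rfl⟩ := Ideal.mem_span_singleton'.mp hq
    have hX : (X r : MvPolynomial (Fin n) K) • (c * monomial e (1 : K)) =
        (c * X M) * monomial f (1 : K) := by
      rw [smul_eq_mul, mul_left_comm, mul_assoc, X, X, monomial_mul, monomial_mul,
        add_comm (Finsupp.single r 1), add_comm (Finsupp.single M 1), hfe]
    rw [hX]
    exact Ideal.mul_mem_left _ _ (Ideal.subset_span ⟨f, ⟨hf, hfgt⟩, rfl⟩)
end

section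
/- Let v be a squarefree monomial of degree 2 in S, let I = (L^i(v)) be the initial lexsegment edge ideal it defines, let t ≥ 1, and let u be a minimal monomial generator of I^t. Then the cardinality of the set { r : 1 ≤ r ≤ max(u) − 1 and ν_r(u) ≤ t − 1 } equals max(u) − 2 if x_j^t divides u for some j < max(u), and equals max(u) − 1 otherwise. -/
/-!
A minimal monomial generator `x^e` of `I ^ t` is a product of `t` of the generators of `I`, all of
them squarefree of degree two. Hence every exponent of `e` is at most `t`, and `e` has total degree
`2 * t` (`exponent_bounds`). If `x_j^t` divides `x^e` for some `j < M`, then the degree left over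
for the other variables is at most `t`, and `x_M` uses at least one unit of it, so no other index
`r < M` satisfies `t ≤ e r`. Thus exactly one index below `M` is excluded from the count;
if there is no such `j`, none is.
-/

open MvPolynomial

/-- If `I` is generated by squarefree monomials of degree two, then `I ^ t` is contained in the
ideal generated by those monomials of `I ^ t` which have degree `2 * t` and all exponents at most
`t`. -/
lemma pow_le_span_bounded {K : Type} [Field K] {n : ℕ} (A : Set (Fin n →₀ ℕ))
    (hA : ∀ f ∈ A, (∀ i, f i ≤ 1) ∧ ∑ i, f i = 2)
    (I : Ideal (MvPolynomial (Fin n) K))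
    (hI : I = Ideal.span ((fun e : Fin n →₀ ℕ => monomial e (1 : K)) '' A)) (t : ℕ) :
    I ^ t ≤ Ideal.span ((fun e : Fin n →₀ ℕ => monomial e (1 : K)) ''
      {f | monomial f (1 : K) ∈ I ^ t ∧ (∀ i, f i ≤ t) ∧ ∑ i, f i = 2 * t}) := by
  induction t with
  | zero =>
    intro x _
    rw [mem_ideal_span_monomial_image]
    intro d _
    exact ⟨0, by simp, zero_le⟩
  | succ t ih =>
    rw [pow_succ]
    refine (Ideal.mul_mono ih hI.le).trans ?_
    rw [Ideal.span_mul_span', Ideal.span_le]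
    rintro _ ⟨_, ⟨f, ⟨hf, hf1, hf2⟩, rfl⟩, _, ⟨g, hg, rfl⟩, rfl⟩
    refine Ideal.subset_span ⟨f + g, ⟨?_, ?_, ?_⟩, ?_⟩
    · have hgI : monomial g (1 : K) ∈ I := hI ▸ Ideal.subset_span ⟨g, hg, rfl⟩
      simpa [monomial_mul] using Ideal.mul_mem_mul hf hgI
    · intro i
      exact add_le_add (hf1 i) ((hA g hg).1 i)
    · simp only [Finsupp.add_apply, Finset.sum_add_distrib, hf2, (hA g hg).2]
      ring
    · simp [monomial_mul]

lemma exponent_bounds {K : Type} [Field K] {n : ℕ} (A : Set (Fin n →₀ ℕ))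
    (hA : ∀ f ∈ A, (∀ i, f i ≤ 1) ∧ ∑ i, f i = 2)
    (I : Ideal (MvPolynomial (Fin n) K))
    (hI : I = Ideal.span ((fun e : Fin n →₀ ℕ => monomial e (1 : K)) '' A)) (t : ℕ)
    (e : Fin n →₀ ℕ) (he : IsMinMonGen (I ^ t) e) :
    (∀ i, e i ≤ t) ∧ ∑ i, e i = 2 * t := by
  have hmem := pow_le_span_bounded A hA I hI t he.1
  rw [mem_ideal_span_monomial_image] at hmem
  obtain ⟨f, ⟨hf, hf1⟩, hfe⟩ := hmem e (by simp)
  suffices h : f = e by rwa [h] at hf1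
  by_contra hne
  -- A proper divisor `x^f` of `x^e` also divides some `x^e / x_i`, against minimality.
  obtain ⟨i, hi⟩ : ∃ i, f i < e i := by
    by_contra! h
    exact hne (le_antisymm hfe h)
  have hle : f + Finsupp.single i 1 ≤ e := by
    intro j
    have := hfe j
    by_cases hj : i = j
    · subst hj
      simpa using hi
    · simpa [Finsupp.single_apply, hj] using this
  refine he.2 i (monomial (e - (f + Finsupp.single i 1)) 1 * monomial f 1) ?_
    (Ideal.mul_mem_left _ _ hf)
  rw [X, monomial_mul, monomial_mul, add_assoc, tsub_add_cancel_of_le hle]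
  simp

/-- For the initial lexsegment edge ideal `I = (L^i(x_a x_b))` and a minimal monomial
generator `u = x^e` of `I^t` with greatest variable `x_M` (so, in `1`-based notation,
`max(u) = M + 1`), the number of indices `r` with `r < M` and `ν_r(u) ≤ t - 1` equals
`max(u) - 2 = M - 1` if `x_j^t ∣ u` for some `j < M`, and `max(u) - 1 = M` otherwise. -/
theorem stmt_1 {K : Type} [Field K] {n : ℕ} (a b : Fin n) (hab : a < b)
    (I : Ideal (MvPolynomial (Fin n) K))
    (hI : I = Ideal.span ((fun e : Fin n →₀ ℕ => monomial e (1 : K)) ''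
      {e : Fin n →₀ ℕ | (∀ i : Fin n, e i ≤ 1) ∧ (∑ i : Fin n, e i) = 2 ∧
        ExpLexGE e (Finsupp.single a 1 + Finsupp.single b 1)}))
    (t : ℕ) (ht : 1 ≤ t)
    (e : Fin n →₀ ℕ) (he : IsMinMonGen (I ^ t) e)
    (M : Fin n) (hM : e M ≠ 0) (hMmax : ∀ j : Fin n, e j ≠ 0 → j ≤ M) :
    ((∃ j : Fin n, j < M ∧ t ≤ e j) →
      (Finset.univ.filter (fun r : Fin n => r < M ∧ e r + 1 ≤ t)).card = (M : ℕ) - 1) ∧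
    ((¬ ∃ j : Fin n, j < M ∧ t ≤ e j) →
      (Finset.univ.filter (fun r : Fin n => r < M ∧ e r + 1 ≤ t)).card = (M : ℕ)) := by
  obtain ⟨hle, hsum⟩ := exponent_bounds _ (fun f hf => ⟨hf.1, hf.2.1⟩) I hI t e he
  constructor
  · rintro ⟨j, hjM, hj⟩
    have hset : Finset.univ.filter (fun r : Fin n => r < M ∧ e r + 1 ≤ t)
        = (Finset.Iio M).erase j := by
      ext r
      simp only [Finset.mem_filter, Finset.mem_univ, true_and, Finset.mem_erase, Finset.mem_Iio]
      constructor
      · rintro ⟨h1, h2⟩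
        refine ⟨?_, h1⟩
        rintro rfl
        omega
      · rintro ⟨h1, h2⟩
        refine ⟨h2, ?_⟩
        -- `x_r`, `x_j` and `x_M` are distinct, so their exponents sum to at most `2 * t`.
        have h3 : ∑ i ∈ {r, j, M}, e i ≤ ∑ i, e i :=
          Finset.sum_le_sum_of_subset (Finset.subset_univ _)
        rw [Finset.sum_insert (by simp [h1, h2.ne]), Finset.sum_pair hjM.ne] at h3
        omega
    rw [hset, Finset.card_erase_of_mem (by simpa using hjM), Fin.card_Iio]
  · intro h
    push Not at h
    have hset : Finset.univ.filter (fun r : Fin n => r < M ∧ e r + 1 ≤ t) = Finset.Iio M := by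
      ext r
      simp only [Finset.mem_filter, Finset.mem_univ, true_and, Finset.mem_Iio]
      exact ⟨fun hr => hr.1, fun hr => ⟨hr, h r hr⟩⟩
    rw [hset, Fin.card_Iio]
end

section
/- Let u be a squarefree monomial of degree 2 in S, let I = (L^f(u)) be the final lexsegment edge ideal it defines, let t ≥ 1, and let w be a minimal monomial generator of I^t. Then the cardinality of the set { r : min(w) + 1 ≤ r ≤ n and ν_r(w) ≤ t − 1 } equals n − min(w) − 1 if x_j^t divides w for some j > min(w), and equals n − min(w) otherwise. -/
/-!
The ideal `I` is generated by monomials of degree `2`, so `I ^ t` is generated by monomials of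
degree `2 * t` (`pow_le_span_degree`) and every minimal monomial generator `w` of `I ^ t` has
degree exactly `2 * t` (`sum_eq_of_isMinMonGen`). As `x_m` divides `w`, the other exponents sum to
less than `2 * t`, so at most one index `j > m` has exponent at least `t`. The counted set is thus
`{r | m < r}`, with that single `j` removed if it exists.
-/

open MvPolynomial

/-- Powers of an ideal generated by monomials of degree `2` are generated by monomials of
degree `2 * t`; the generators are kept inside `I ^ t`. -/
lemma pow_le_span_degree {K : Type} [Field K] {n : ℕ} (G : Set (Fin n →₀ ℕ))
    (hG : ∀ f ∈ G, ∑ i, f i = 2) (I : Ideal (MvPolynomial (Fin n) K))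
    (hI : I = Ideal.span ((fun e : Fin n →₀ ℕ => monomial e (1 : K)) '' G)) (t : ℕ) :
    I ^ t ≤ Ideal.span ((fun e : Fin n →₀ ℕ => monomial e (1 : K)) ''
      {f | ∑ i, f i = 2 * t ∧ monomial f (1 : K) ∈ I ^ t}) := by
  induction t with
  | zero =>
    have h : (1 : MvPolynomial (Fin n) K) ∈
        Ideal.span ((fun e : Fin n →₀ ℕ => monomial e (1 : K)) ''
          {f | ∑ i, f i = 2 * 0 ∧ monomial f (1 : K) ∈ I ^ 0}) :=
      Ideal.subset_span ⟨0, by simp, rfl⟩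
    rw [(Ideal.eq_top_iff_one _).2 h]
    exact le_top
  | succ t ih =>
    have hmem : ∀ g ∈ G, monomial g (1 : K) ∈ I := fun g hg => by
      rw [hI]
      exact Ideal.subset_span ⟨g, hg, rfl⟩
    rw [pow_succ]
    refine (Ideal.mul_mono ih hI.le).trans ?_
    rw [Ideal.span_mul_span', Ideal.span_le]
    rintro _ ⟨_, ⟨f, ⟨hf, hfI⟩, rfl⟩, _, ⟨g, hg, rfl⟩, rfl⟩
    refine Ideal.subset_span ⟨f + g, ⟨?_, ?_⟩, ?_⟩
    · simp only [Finsupp.add_apply, Finset.sum_add_distrib, hf, hG g hg]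
      ring
    · have := Ideal.mul_mem_mul hfI (hmem g hg)
      rwa [monomial_mul, one_mul] at this
    · simp [monomial_mul]

lemma sum_eq_of_isMinMonGen {K : Type} [Field K] {n : ℕ} (G : Set (Fin n →₀ ℕ))
    (hG : ∀ f ∈ G, ∑ i, f i = 2) (I : Ideal (MvPolynomial (Fin n) K))
    (hI : I = Ideal.span ((fun e : Fin n →₀ ℕ => monomial e (1 : K)) '' G)) (t : ℕ)
    (e : Fin n →₀ ℕ) (he : IsMinMonGen (I ^ t) e) : ∑ i, e i = 2 * t := by
  have h := pow_le_span_degree G hG I hI t he.1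
  rw [mem_ideal_span_monomial_image] at h
  obtain ⟨f, ⟨hf, hfI⟩, hle⟩ := h e (by simp [mem_support_iff])
  by_cases hfe : f = e
  · rw [← hfe, hf]
  exfalso
  obtain ⟨i, hi⟩ : ∃ i, f i < e i := by
    by_contra! hcon
    exact hfe (le_antisymm hle hcon)
  -- `x^f` still divides `x^e / x_i`, which contradicts minimality of `x^e`.
  have hsi : Finsupp.single i 1 ≤ e := by
    rw [Finsupp.single_le_iff]
    omega
  have hfi : f ≤ e - Finsupp.single i 1 := by
    intro j
    have := hle j
    by_cases hj : i = j
    · subst hj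
      simp
      omega
    · simpa [Finsupp.single_apply, hj] using this
  refine he.2 i (monomial (e - Finsupp.single i 1) 1) ?_ ?_
  · rw [X, monomial_mul, tsub_add_cancel_of_le hsi, one_mul]
  · rw [← tsub_add_cancel_of_le hfi, ← one_mul (1 : K), ← monomial_mul]
    exact Ideal.mul_mem_left _ _ hfI

/-- For the final lexsegment edge ideal `I = (L^f(x_a x_b))` and a minimal monomial
generator `w = x^e` of `I^t` with smallest variable `x_m` (so, in `1`-based notation,
`min(w) = m + 1`), the number of indices `r` with `r > m` and `ν_r(w) ≤ t - 1` equals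
`n - min(w) - 1 = n - m - 2` if `x_j^t ∣ w` for some `j > m`, and
`n - min(w) = n - m - 1` otherwise. -/
theorem stmt_3 {K : Type} [Field K] {n : ℕ} (a b : Fin n) (hab : a < b)
    (I : Ideal (MvPolynomial (Fin n) K))
    (hI : I = Ideal.span ((fun e : Fin n →₀ ℕ => monomial e (1 : K)) ''
      {e : Fin n →₀ ℕ | (∀ i : Fin n, e i ≤ 1) ∧ (∑ i : Fin n, e i) = 2 ∧
        ExpLexGE (Finsupp.single a 1 + Finsupp.single b 1) e}))
    (t : ℕ) (ht : 1 ≤ t)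
    (e : Fin n →₀ ℕ) (he : IsMinMonGen (I ^ t) e)
    (m : Fin n) (hm : e m ≠ 0) (hmmin : ∀ j : Fin n, e j ≠ 0 → m ≤ j) :
    ((∃ j : Fin n, m < j ∧ t ≤ e j) →
      (Finset.univ.filter (fun r : Fin n => m < r ∧ e r + 1 ≤ t)).card = n - (m : ℕ) - 2) ∧
    ((¬ ∃ j : Fin n, m < j ∧ t ≤ e j) →
      (Finset.univ.filter (fun r : Fin n => m < r ∧ e r + 1 ≤ t)).card = n - (m : ℕ) - 1) := by
  have hsum : ∑ i, e i = 2 * t :=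
    sum_eq_of_isMinMonGen _ (fun f hf => hf.2.1) I hI t e he
  constructor
  · rintro ⟨j, hmj, hj⟩
    have huniq : ∀ r, m < r → r ≠ j → e r + 1 ≤ t := by
      intro r hmr hrj
      have h3 : ∑ i ∈ ({m, r, j} : Finset (Fin n)), e i ≤ ∑ i, e i :=
        Finset.sum_le_sum_of_subset (Finset.subset_univ _)
      rw [Finset.sum_insert (by simp [hmr.ne, hmj.ne]), Finset.sum_pair hrj, hsum] at h3
      omega
    have hset : Finset.univ.filter (fun r : Fin n => m < r ∧ e r + 1 ≤ t) =
        (Finset.Ioi m).erase j := by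
      ext r
      simp only [Finset.mem_filter, Finset.mem_univ, true_and, Finset.mem_erase, Finset.mem_Ioi]
      constructor
      · rintro ⟨h1, h2⟩
        refine ⟨?_, h1⟩
        rintro rfl
        omega
      · rintro ⟨h1, h2⟩
        exact ⟨h2, huniq r h2 h1⟩
    rw [hset, Finset.card_erase_of_mem (by simpa using hmj), Fin.card_Ioi]
    omega
  · intro hno
    have hset : Finset.univ.filter (fun r : Fin n => m < r ∧ e r + 1 ≤ t) = Finset.Ioi m := by
      ext r
      simp only [Finset.mem_filter, Finset.mem_univ, true_and, Finset.mem_Ioi]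
      refine ⟨fun h => h.1, fun h => ⟨h, ?_⟩⟩
      by_contra hlt
      exact hno ⟨r, h, by omega⟩
    rw [hset, Fin.card_Ioi]
    omega
end

section
/- Let d ≥ 1, n ≥ d + 2, let Ḡ be the anti-d-path on vertex set [n] and I = I(Ḡ) = (x_i x_j : i + d < j) its edge ideal in S. Then for every k ≥ 1, the minimal monomial generating set of I^k is exactly the set of monomials x_{i_1} ⋯ x_{i_k} x_{j_1} ⋯ x_{j_k} with i_1 ≤ ⋯ ≤ i_k ≤ j_1 ≤ ⋯ ≤ j_k and i_r + d < j_r for all 1 ≤ r ≤ k. -/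
/-!
A product of `k` edges is a monomial of degree `2k`, and `I ^ k` is spanned by such products, so its
minimal monomial generators are exactly the products of `k` edges (`isMinMonGen_pow_iff`).

It remains to see that every product of `k` edges has the sorted form (`exists_sorted`). Sort its
`2k` variables as `v_1 ≤ ⋯ ≤ v_{2k}` and put `i_r = v_r`, `j_r = v_{k+r}`. If `v_{k+r} ≤ v_r + d`,
then the `k + 1` entries `v_r, …, v_{k+r}` lie in an interval of length `d`; by pigeonhole two of
them are the endpoints of one of the `k` edges, whose endpoints differ by more than `d`.
-/

open MvPolynomial

/-- Exponent vectors of products of `k` edges `x_{a_r} x_{b_r}`, `a_r + d < b_r`. -/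
def edgeProducts (n d k : ℕ) : Set (Fin n →₀ ℕ) :=
  {e | ∃ a b : Fin k → Fin n, (∀ r, (a r : ℕ) + d < (b r : ℕ)) ∧
    e = (∑ r : Fin k, Finsupp.single (a r) 1) + ∑ r : Fin k, Finsupp.single (b r) 1}

lemma degree_of_mem_edgeProducts {n d k : ℕ} {e : Fin n →₀ ℕ} (he : e ∈ edgeProducts n d k) :
    e.degree = k + k := by
  obtain ⟨a, b, -, rfl⟩ := he
  simp [map_sum]

lemma pow_eq_span_edgeProducts {K : Type} [Field K] (n d k : ℕ) :
    (Ideal.span {w : MvPolynomial (Fin n) K |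
      ∃ i j : Fin n, (i : ℕ) + d < (j : ℕ) ∧ w = X i * X j}) ^ k =
    Ideal.span ((fun e => monomial e (1 : K)) '' edgeProducts n d k) := by
  have key (a b : Fin k → Fin n) : (∏ r, (X (a r) * X (b r) : MvPolynomial (Fin n) K)) =
      monomial ((∑ r : Fin k, Finsupp.single (a r) 1) + ∑ r : Fin k, Finsupp.single (b r) 1) 1 := by
    rw [← Finset.sum_add_distrib, monomial_sum_one]
    refine Finset.prod_congr rfl fun r _ => ?_
    simp [X, monomial_mul]
  rw [Ideal.span, Submodule.span_pow]
  congr 1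
  ext w
  rw [Set.mem_pow]
  constructor
  · rintro ⟨f, rfl⟩
    choose a b hab hf using fun r => (f r).2
    refine ⟨_, ⟨a, b, hab, rfl⟩, ?_⟩
    simp only [List.prod_ofFn, hf, key]
  · rintro ⟨_, ⟨a, b, hab, rfl⟩, rfl⟩
    refine ⟨fun r => ⟨X (a r) * X (b r), a r, b r, hab r, rfl⟩, ?_⟩
    simp only [List.prod_ofFn, key]

lemma isMinMonGen_pow_iff {K : Type} [Field K] (n d k : ℕ) (e : Fin n →₀ ℕ) :
    IsMinMonGen (Ideal.span ((fun e => monomial e (1 : K)) '' edgeProducts n d k)) e ↔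
      e ∈ edgeProducts n d k := by
  constructor
  · rintro ⟨h1, h2⟩
    rw [mem_ideal_span_monomial_image] at h1
    obtain ⟨p, hp, hpe⟩ := h1 e (by simp)
    by_contra hne
    have hpe' : p ≠ e := by rintro rfl; exact hne hp
    obtain ⟨i, hi⟩ : ∃ i, p i < e i := by
      by_contra! h
      exact hpe' (le_antisymm hpe h)
    have hs : Finsupp.single i 1 ≤ e := by
      rw [Finsupp.single_le_iff]; omega
    refine h2 i (monomial (e - Finsupp.single i 1) 1) ?_ ?_
    · rw [X, monomial_mul, tsub_add_cancel_of_le hs, one_mul]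
    · rw [mem_ideal_span_monomial_image]
      intro m hm
      obtain rfl : m = e - Finsupp.single i 1 := by
        simpa using support_monomial_subset hm
      refine ⟨p, hp, fun t => ?_⟩
      have := hpe t
      rw [Finsupp.tsub_apply, Finsupp.single_apply]
      split_ifs with h
      · subst h; omega
      · omega
  · intro he
    refine ⟨Ideal.subset_span ⟨e, he, rfl⟩, fun i w hw hmem => ?_⟩
    have hw0 : w ≠ 0 := by
      rintro rfl
      rw [zero_mul] at hw
      exact one_ne_zero ((monomial_eq_zero).1 hw.symm)
    obtain ⟨m, hm⟩ := support_nonempty.2 hw0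
    rw [mem_ideal_span_monomial_image] at hmem
    obtain ⟨p, hp, hpm⟩ := hmem m hm
    have hme : e = m + Finsupp.single i 1 := by
      have h := coeff_mul_X m i w
      rw [hw, coeff_monomial] at h
      by_contra hne
      rw [if_neg hne] at h
      exact (mem_support_iff.1 hm) h.symm
    -- `e` and `p` both have degree `2k`, but `p` divides `e / x_i`.
    have h1 := degree_of_mem_edgeProducts he
    have h2 := degree_of_mem_edgeProducts hp
    have h3 : p.degree ≤ m.degree := Finsupp.degree_mono hpm
    rw [hme, map_add, Finsupp.degree_single] at h1
    omega

lemma exists_sorted {n d k : ℕ} {e : Fin n →₀ ℕ} (he : e ∈ edgeProducts n d k) :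
    ∃ i j : Fin k → Fin n, Monotone i ∧ Monotone j ∧ (∀ r s : Fin k, i r ≤ j s) ∧
      (∀ r : Fin k, (i r : ℕ) + d < (j r : ℕ)) ∧
      e = (∑ r : Fin k, Finsupp.single (i r) 1) + ∑ r : Fin k, Finsupp.single (j r) 1 := by
  obtain ⟨a, b, hab, rfl⟩ := he
  set f : Fin k ⊕ Fin k → Fin n := Sum.elim a b with hf
  let σ := Tuple.sort (f ∘ finSumFinEquiv.symm)
  -- `τ` lists the `2k` endpoints of the edges in increasing order of their vertices.
  let τ : Fin (k + k) ≃ Fin k ⊕ Fin k := σ.trans finSumFinEquiv.symm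
  have hmono : Monotone (f ∘ τ) := Tuple.monotone_sort (f ∘ finSumFinEquiv.symm)
  refine ⟨fun r => f (τ (Fin.castAdd k r)), fun r => f (τ (Fin.natAdd k r)),
    fun r s h => hmono ?_, fun r s h => hmono ?_, fun r s => hmono ?_, fun r => ?_, ?_⟩
  · simpa only [Fin.le_def, Fin.val_castAdd] using h
  · simpa only [Fin.le_def, Fin.val_natAdd, add_le_add_iff_left] using h
  · simp only [Fin.le_def, Fin.val_castAdd, Fin.val_natAdd]; omega
  · by_contra! hle
    let q : Fin (k + 1) → Fin (k + k) := fun t => ⟨r + t, by omega⟩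
    obtain ⟨t, t', hne, heq⟩ := Fintype.exists_ne_map_eq_of_card_lt
      (fun t => Sum.elim id id (τ (q t)) : Fin (k + 1) → Fin k) (by simp)
    have hτ : τ (q t) ≠ τ (q t') := by
      intro h
      have := τ.injective h
      simp only [q, Fin.mk.injEq] at this
      exact hne (Fin.ext (by omega))
    have lo (t : Fin (k + 1)) : (f (τ (Fin.castAdd k r)) : ℕ) ≤ f (τ (q t)) :=
      hmono (show Fin.castAdd k r ≤ q t by simp [Fin.le_def, q])
    have hi (t : Fin (k + 1)) : (f (τ (q t)) : ℕ) ≤ f (τ (Fin.natAdd k r)) :=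
      hmono (show q t ≤ Fin.natAdd k r by simp [Fin.le_def, q]; omega)
    have l1 := lo t
    have l2 := lo t'
    have h1 := hi t
    have h2 := hi t'
    generalize τ (q t) = u at *
    generalize τ (q t') = u' at *
    rcases u with u | u <;> rcases u' with u' | u' <;> simp [hf] at heq hτ l1 l2 h1 h2
    · exact hτ heq
    · subst heq; have := hab u; simp [hf] at hle; omega
    · subst heq; have := hab u; simp [hf] at hle; omega
    · exact hτ heq
  · rw [← Fin.sum_univ_add (fun t => Finsupp.single (f (τ t)) 1),
      Equiv.sum_comp τ (fun u => Finsupp.single (f u) 1), Fintype.sum_sum_type]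
    simp [hf]

/-- For the edge ideal `I = (x_i x_j : i + d < j)` of the anti-`d`-path on `n` vertices,
the minimal monomial generators of `I^k` are exactly the monomials
`x_{i_1} ⋯ x_{i_k} x_{j_1} ⋯ x_{j_k}` with `i_1 ≤ ⋯ ≤ i_k ≤ j_1 ≤ ⋯ ≤ j_k` and
`i_r + d < j_r` for all `r`. -/
theorem stmt_4 {K : Type} [Field K] {n d : ℕ} (hd : 1 ≤ d) (hn : d + 2 ≤ n)
    (I : Ideal (MvPolynomial (Fin n) K))
    (hI : I = Ideal.span {w : MvPolynomial (Fin n) K |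
      ∃ i j : Fin n, (i : ℕ) + d < (j : ℕ) ∧ w = X i * X j})
    (k : ℕ) (hk : 1 ≤ k) (e : Fin n →₀ ℕ) :
    IsMinMonGen (I ^ k) e ↔
      ∃ i j : Fin k → Fin n, Monotone i ∧ Monotone j ∧ (∀ r s : Fin k, i r ≤ j s) ∧
        (∀ r : Fin k, (i r : ℕ) + d < (j r : ℕ)) ∧
        e = (∑ r : Fin k, Finsupp.single (i r) 1) +
            ∑ r : Fin k, Finsupp.single (j r) 1 := by
  subst hI
  rw [pow_eq_span_edgeProducts, isMinMonGen_pow_iff]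
  refine ⟨exists_sorted, ?_⟩
  rintro ⟨i, j, -, -, -, h, he⟩
  exact ⟨i, j, h, he⟩
end

section
/- Let d ≥ 1, n ≥ d + 2, let Ḡ be the anti-d-path on vertex set [n] and I = I(Ḡ) = (x_i x_j : i + d < j) its edge ideal in S. Then for every k ≥ 1, the ideal I^k has linear quotients with respect to the decreasing lexicographic order of its minimal monomial generators: that is, for every minimal monomial generator m of I^k, the colon ideal ( w : w a minimal monomial generator of I^k with w >_lex m ) : (m) is generated by variables. -/
/-! For an exponent vector `e`, a monomial `x^e` of degree `2k` is a product of `k` edges of the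
anti-`d`-path exactly when every window `[a, a + d]` of consecutive indices carries total exponent
at most `k` (`IsGood`). An edge has at most one endpoint in each window, so the condition is
necessary. Conversely (`IsGood.exists_edge`), if `a_1 ≤ ⋯ ≤ a_{2k}` lists the indices with
multiplicity, then `{a_1, a_{k+1}}` is an edge which meets every window of weight exactly `k`;
removing it leaves a vector satisfying the condition for `k - 1`. Hence the good vectors are the
minimal monomial generators of `I^k` (`isMinMonGen_iff`).

Linear quotients follow from an exchange (`IsGood.exchange`). Let `f >ₗₑₓ e` be good, with first
difference at `i`, and let `t` be the smallest index `> i` in the support of `e`. Then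
`g = e + δ_i - δ_t` is good: a window of `e`-weight `k` that contains `i` but ends before `t` would
have `f`-weight larger than `k`. Moreover `g >ₗₑₓ e` and `x_i` divides `x^f / gcd(x^f, x^e)`,
so the colon ideal is generated by the variables it contains. -/

open MvPolynomial

open Finsupp (single single_apply)

/-- Total exponent of `e` on the indices in the half-open interval `[lo, hi)`. -/
def intervalSum {n : ℕ} (e : Fin n →₀ ℕ) (lo hi : ℕ) : ℕ :=
  ∑ j : Fin n, if lo ≤ (j : ℕ) ∧ (j : ℕ) < hi then e j else 0

/-- `x^e` has degree `2k` and each window `[a, a + d]` carries total exponent at most `k`. -/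
def IsGood {n : ℕ} (d k : ℕ) (e : Fin n →₀ ℕ) : Prop :=
  intervalSum e 0 n = 2 * k ∧ ∀ a, intervalSum e a (a + d + 1) ≤ k

/-! ### Exponent sums over intervals -/

section IntervalSum

variable {n : ℕ}

lemma intervalSum_add (e f : Fin n →₀ ℕ) (lo hi : ℕ) :
    intervalSum (e + f) lo hi = intervalSum e lo hi + intervalSum f lo hi := by
  unfold intervalSum
  rw [← Finset.sum_add_distrib]
  refine Finset.sum_congr rfl fun j _ => ?_
  split_ifs <;> simp

lemma intervalSum_single (i : Fin n) (lo hi : ℕ) :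
    intervalSum (single i 1) lo hi = if lo ≤ (i : ℕ) ∧ (i : ℕ) < hi then 1 else 0 := by
  unfold intervalSum
  rw [Finset.sum_eq_single i]
  · simp
  · intro b _ hb
    simp [hb.symm]
  · simp

lemma intervalSum_split (e : Fin n →₀ ℕ) {lo mid hi : ℕ} (h₁ : lo ≤ mid) (h₂ : mid ≤ hi) :
    intervalSum e lo hi = intervalSum e lo mid + intervalSum e mid hi := by
  unfold intervalSum
  rw [← Finset.sum_add_distrib]
  refine Finset.sum_congr rfl fun j _ => ?_
  split_ifs <;> omega

lemma intervalSum_succ (e : Fin n →₀ ℕ) (i : Fin n) :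
    intervalSum e i (i + 1) = e i := by
  unfold intervalSum
  rw [Finset.sum_eq_single i]
  · simp
  · intro b _ hb
    rw [if_neg]
    intro h
    exact hb (Fin.ext (by omega))
  · simp

lemma intervalSum_self (e : Fin n →₀ ℕ) (a : ℕ) : intervalSum e a a = 0 := by
  have := intervalSum_split e (le_refl a) (le_refl a)
  omega

lemma intervalSum_congr {e f : Fin n →₀ ℕ} {lo hi : ℕ}
    (h : ∀ j : Fin n, (j : ℕ) < hi → e j = f j) : intervalSum e lo hi = intervalSum f lo hi := by
  unfold intervalSum
  refine Finset.sum_congr rfl fun j _ => ?_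
  split_ifs with hj
  · exact h j hj.2
  · rfl

lemma intervalSum_of_le (e : Fin n →₀ ℕ) {lo hi : ℕ} (h : n ≤ lo) : intervalSum e lo hi = 0 := by
  unfold intervalSum
  refine Finset.sum_eq_zero fun j _ => ?_
  rw [if_neg]
  omega

lemma intervalSum_le_total (e : Fin n →₀ ℕ) {hi : ℕ} :
    intervalSum e 0 hi ≤ intervalSum e 0 n := by
  rcases le_total hi n with h | h
  · have := intervalSum_split e (Nat.zero_le hi) h
    omega
  · have := intervalSum_split e (Nat.zero_le n) h
    have := intervalSum_of_le e (le_refl n) (hi := hi)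
    omega

/-- The index `j` is the `t`-th entry of the weakly increasing list of the indices of `e`, counted
with multiplicity. -/
lemma exists_level (e : Fin n →₀ ℕ) {t : ℕ} (h₀ : 0 < t) (h : t ≤ intervalSum e 0 n) :
    ∃ j : Fin n, intervalSum e 0 j < t ∧ t ≤ intervalSum e 0 (j + 1) := by
  classical
  have hex : ∃ m, t ≤ intervalSum e 0 m := ⟨n, h⟩
  have hspec := Nat.find_spec hex
  have hmin := fun m => Nat.find_min (m := m) hex
  have hle : Nat.find hex ≤ n := Nat.find_min' hex h
  obtain ⟨m, hm⟩ : ∃ m, Nat.find hex = m + 1 := by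
    refine Nat.exists_eq_succ_of_ne_zero fun h0 => ?_
    rw [h0, intervalSum_self] at hspec
    omega
  rw [hm] at hspec hmin hle
  exact ⟨⟨m, by omega⟩, not_le.mp (hmin m (by omega)), hspec⟩

end IntervalSum

/-! ### Good exponent vectors -/

section Good

variable {n d k : ℕ}

lemma IsGood.add_edge {e : Fin n →₀ ℕ} (he : IsGood d k e) {i j : Fin n}
    (hij : (i : ℕ) + d < j) : IsGood d (k + 1) (e + (single i 1 + single j 1)) := by
  refine ⟨?_, fun a => ?_⟩
  · have := he.1
    simp only [intervalSum_add, intervalSum_single]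
    simp
    omega
  · have := he.2 a
    simp only [intervalSum_add, intervalSum_single]
    split_ifs <;> omega

/-- An edge can be split off a good vector: `i` and `j` are the first and the `(k + 2)`-nd entry
of the sorted list of the `2 (k + 1)` indices of `e`. -/
lemma IsGood.exists_edge {e : Fin n →₀ ℕ} (he : IsGood d (k + 1) e) :
    ∃ g : Fin n →₀ ℕ, ∃ i j : Fin n, IsGood d k g ∧ (i : ℕ) + d < j ∧
      e = g + (single i 1 + single j 1) := by
  obtain ⟨htot, hwin⟩ := he
  obtain ⟨i, hi, hi'⟩ := exists_level e (t := 1) (by omega) (by omega)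
  obtain ⟨j, hj, hj'⟩ := exists_level e (t := k + 2) (by omega) (by omega)
  have hei := intervalSum_split e (Nat.zero_le (i : ℕ)) (Nat.le_succ i)
  have hej := intervalSum_split e (Nat.zero_le (j : ℕ)) (Nat.le_succ j)
  rw [Nat.succ_eq_add_one, intervalSum_succ] at hei hej
  have hij : (i : ℕ) + d < j := by
    by_contra hcon
    have h1 := hwin i
    have h2 := intervalSum_split e (Nat.zero_le (i : ℕ)) (show (i : ℕ) ≤ i + d + 1 by omega)
    have h3 := intervalSum_split e (Nat.zero_le ((j : ℕ) + 1))
      (show (j : ℕ) + 1 ≤ i + d + 1 by omega)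
    omega
  have hne : i ≠ j := by
    rintro rfl
    omega
  have hle : single i 1 + single j 1 ≤ e := by
    intro s
    simp only [Finsupp.add_apply, single_apply]
    split_ifs with h1 h2 h2
    · exact absurd (h1.trans h2.symm) hne
    · subst h1; omega
    · subst h2; omega
    · omega
  obtain ⟨g, hg⟩ := exists_add_of_le hle
  rw [add_comm] at hg
  refine ⟨g, i, j, ⟨?_, fun a => ?_⟩, hij, hg⟩
  · rw [hg] at htot
    simp only [intervalSum_add, intervalSum_single] at htot
    simp at htot
    omega
  · have hw := hwin a
    have key : intervalSum e a (a + d + 1) = k + 1 →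
        (a ≤ (i : ℕ) ∧ (i : ℕ) < a + d + 1) ∨ (a ≤ (j : ℕ) ∧ (j : ℕ) < a + d + 1) := by
      intro htight
      by_contra! hcon
      have h1 := intervalSum_split e (Nat.zero_le a) (show a ≤ a + d + 1 by omega)
      rcases lt_or_ge (j : ℕ) a with hja | hja
      · -- to the right of `j` only `k` of the `2 (k + 1)` indices remain
        have h2 := intervalSum_split e (Nat.zero_le ((j : ℕ) + 1)) (show (j : ℕ) + 1 ≤ a by omega)
        have h3 := intervalSum_le_total e (hi := a + d + 1)
        omega
      · -- the window ends before `j`, so it holds the first `k + 1` indices, in particular `i`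
        have hend := hcon.2 hja
        have h2 := intervalSum_split e (Nat.zero_le (a + d + 1)) hend
        rcases lt_or_ge (i : ℕ) a with hia | hia
        · have h3 := intervalSum_split e (Nat.zero_le ((i : ℕ) + 1))
            (show (i : ℕ) + 1 ≤ a by omega)
          omega
        · have h3 := intervalSum_split e (Nat.zero_le (a + d + 1)) (hcon.1 hia)
          omega
    have hsum : intervalSum e a (a + d + 1) = intervalSum g a (a + d + 1) +
        ((if a ≤ (i : ℕ) ∧ (i : ℕ) < a + d + 1 then 1 else 0) +
          if a ≤ (j : ℕ) ∧ (j : ℕ) < a + d + 1 then 1 else 0) := by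
      conv_lhs => rw [hg]
      simp only [intervalSum_add, intervalSum_single]
    split_ifs at hsum <;> omega

/-- The exchange property behind linear quotients: some `g >ₗₑₓ e` satisfies `x^g ∣ x_i x^e` for a
variable `x_i` that occurs in `x^f` with larger exponent than in `x^e`. -/
lemma IsGood.exchange {e f : Fin n →₀ ℕ} (he : IsGood d k e) (hf : IsGood d k f)
    (hfe : ExpLexGT f e) :
    ∃ (i : Fin n) (g : Fin n →₀ ℕ), e i < f i ∧ IsGood d k g ∧ ExpLexGT g e ∧
      g ≤ e + single i 1 := by
  obtain ⟨i, hpre, hi⟩ := hfe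
  have hcongr : ∀ lo, intervalSum f lo i = intervalSum e lo i := fun lo =>
    intervalSum_congr fun j hj => hpre j hj
  have hsucc : ∀ lo, lo ≤ (i : ℕ) → intervalSum e lo (i + 1) < intervalSum f lo (i + 1) := by
    intro lo hlo
    have h1 := intervalSum_split e hlo (Nat.le_succ i)
    have h2 := intervalSum_split f hlo (Nat.le_succ i)
    rw [Nat.succ_eq_add_one, intervalSum_succ] at h1 h2
    have := hcongr lo
    omega
  obtain ⟨t, ht, ht'⟩ := exists_level e (t := intervalSum e 0 (i + 1) + 1) (by omega) (by
    have h1 := hsucc 0 (by omega)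
    have h2 := intervalSum_le_total f (hi := (i : ℕ) + 1)
    have := he.1
    have := hf.1
    omega)
  have hit : (i : ℕ) < t := by
    by_contra hcon
    have := intervalSum_split e (Nat.zero_le ((t : ℕ) + 1)) (show (t : ℕ) + 1 ≤ i + 1 by omega)
    omega
  have hgap := intervalSum_split e (Nat.zero_le ((i : ℕ) + 1)) (show (i : ℕ) + 1 ≤ t by omega)
  have het := intervalSum_split e (Nat.zero_le (t : ℕ)) (Nat.le_succ t)
  rw [Nat.succ_eq_add_one, intervalSum_succ] at het
  have hle : single t 1 ≤ e := by
    rw [Finsupp.single_le_iff]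
    omega
  obtain ⟨r, hr⟩ := exists_add_of_le hle
  refine ⟨i, r + single i 1, hi, ⟨?_, fun a => ?_⟩, ⟨i, fun j hj => ?_, ?_⟩, ?_⟩
  · have h := he.1
    rw [hr] at h
    simp only [intervalSum_add, intervalSum_single] at h ⊢
    simp at h ⊢
    omega
  · have hsum : intervalSum e a (a + d + 1) =
        (if a ≤ (t : ℕ) ∧ (t : ℕ) < a + d + 1 then 1 else 0) + intervalSum r a (a + d + 1) := by
      conv_lhs => rw [hr]
      simp only [intervalSum_add, intervalSum_single]
    have hwe := he.2 a
    have hwf := hf.2 a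
    have key : a ≤ (i : ℕ) ∧ (i : ℕ) < a + d + 1 → ¬ (t : ℕ) < a + d + 1 →
        intervalSum e a (a + d + 1) < k := by
      rintro ⟨hai, hia⟩ hta
      have h1 := intervalSum_split e (show a ≤ (i : ℕ) + 1 by omega)
        (show (i : ℕ) + 1 ≤ a + d + 1 by omega)
      have h2 := intervalSum_split f (show a ≤ (i : ℕ) + 1 by omega)
        (show (i : ℕ) + 1 ≤ a + d + 1 by omega)
      have h3 := intervalSum_split e (show (i : ℕ) + 1 ≤ a + d + 1 by omega)
        (show a + d + 1 ≤ t by omega)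
      have h4 := hsucc a hai
      omega
    simp only [intervalSum_add, intervalSum_single]
    split_ifs at hsum ⊢ <;> omega
  · have h1 : i ≠ j := fun h => by subst h; exact lt_irrefl _ hj
    have h2 : t ≠ j := fun h => by subst h; have : (t : ℕ) < i := hj; omega
    rw [hr]
    simp [h1, h2]
  · have h2 : t ≠ i := fun h => by subst h; omega
    rw [hr]
    simp [h2]
  · rw [hr]
    intro s
    simp only [Finsupp.add_apply]
    omega

end Good

/-! ### Powers of the edge ideal and their minimal generators -/

section Ideals

variable {K : Type} [Field K] {n d : ℕ}

/-- `I^k` is generated by the monomials with good exponent vectors. -/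
lemma pow_eq_span (k : ℕ) :
    (Ideal.span {w : MvPolynomial (Fin n) K |
      ∃ i j : Fin n, (i : ℕ) + d < (j : ℕ) ∧ w = X i * X j}) ^ k =
    Ideal.span ((fun s => monomial s (1 : K)) '' {e | IsGood d k e}) := by
  induction k with
  | zero =>
    rw [pow_zero, Ideal.one_eq_top, eq_comm, Ideal.eq_top_iff_one]
    refine Ideal.subset_span ⟨0, ⟨?_, fun a => ?_⟩, rfl⟩ <;> simp [intervalSum]
  | succ k ih =>
    have hX : ∀ i j : Fin n, (X i * X j : MvPolynomial (Fin n) K) =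
        monomial (single i 1 + single j 1) 1 := by
      intro i j
      simp [X, monomial_mul]
    rw [pow_succ, ih, Ideal.span_mul_span']
    congr 1
    ext w
    rw [Set.mem_mul]
    constructor
    · rintro ⟨_, ⟨g, hg, rfl⟩, _, ⟨i, j, hij, rfl⟩, rfl⟩
      refine ⟨_, IsGood.add_edge hg hij, ?_⟩
      simp [hX, monomial_mul]
    · rintro ⟨e, he, rfl⟩
      obtain ⟨g, i, j, hg, hij, rfl⟩ := IsGood.exists_edge he
      refine ⟨_, ⟨g, hg, rfl⟩, _, ⟨i, j, hij, rfl⟩, ?_⟩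
      simp [hX, monomial_mul]

lemma intervalSum_mono {e f : Fin n →₀ ℕ} (h : e ≤ f) (lo hi : ℕ) :
    intervalSum e lo hi ≤ intervalSum f lo hi := by
  obtain ⟨r, rfl⟩ := exists_add_of_le h
  rw [intervalSum_add]
  omega

lemma isMinMonGen_iff_s5 (k : ℕ) (e : Fin n →₀ ℕ) :
    IsMinMonGen (Ideal.span ((fun s => monomial s (1 : K)) '' {e : Fin n →₀ ℕ | IsGood d k e})) e ↔
      IsGood d k e := by
  constructor
  · rintro ⟨hmem, hmin⟩
    rw [mem_ideal_span_monomial_image] at hmem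
    obtain ⟨g, hg, hge⟩ := hmem e (by simp)
    obtain ⟨r, rfl⟩ := exists_add_of_le hge
    by_cases hr : r = 0
    · simpa [hr] using hg
    obtain ⟨i, hi⟩ := Finsupp.ne_iff.mp hr
    obtain ⟨r', rfl⟩ := exists_add_of_le (show single i 1 ≤ r by
      rw [Finsupp.single_le_iff]
      exact Nat.one_le_iff_ne_zero.mpr hi)
    refine absurd ?_ (hmin i (monomial (g + r') 1) ?_)
    · rw [mem_ideal_span_monomial_image]
      intro m hm
      refine ⟨g, hg, ?_⟩
      have : g + r' = m := by simpa using hm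
      rw [← this]
      exact le_self_add
    · simp only [X, monomial_mul, mul_one]
      rw [add_assoc, add_comm r']
  · intro he
    refine ⟨Ideal.subset_span ⟨e, he, rfl⟩, fun i w hw hwJ => ?_⟩
    have hw0 : w ≠ 0 := by
      rintro rfl
      rw [zero_mul] at hw
      exact one_ne_zero (monomial_eq_zero.mp hw.symm)
    obtain ⟨m, hm⟩ := MvPolynomial.support_nonempty.mpr hw0
    rw [mem_ideal_span_monomial_image] at hwJ
    obtain ⟨g, hg, hgm⟩ := hwJ m hm
    have hc := coeff_mul_X m i w
    rw [hw, coeff_monomial] at hc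
    have hem : e = m + single i 1 := by
      by_contra hne
      rw [if_neg hne] at hc
      exact mem_support_iff.mp hm hc.symm
    -- `w` would contain a monomial of degree `2k - 1`
    have h1 := intervalSum_mono hgm 0 n
    have h2 := he.1
    have h3 := hg.1
    rw [hem, intervalSum_add, intervalSum_single] at h2
    simp at h2
    omega

end Ideals

/-- For the edge ideal `I = (x_i x_j : i + d < j)` of the anti-`d`-path on `n` vertices,
every power `I^k` has linear quotients with respect to the decreasing lexicographic
order of its minimal monomial generators: for each minimal monomial generator `u = x^e`
of `I^k`, the colon ideal of the lex-greater minimal generators by `u` is generated by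
variables. -/
theorem stmt_5 {K : Type} [Field K] {n d : ℕ} (hd : 1 ≤ d) (hn : d + 2 ≤ n)
    (I : Ideal (MvPolynomial (Fin n) K))
    (hI : I = Ideal.span {w : MvPolynomial (Fin n) K |
      ∃ i j : Fin n, (i : ℕ) + d < (j : ℕ) ∧ w = X i * X j})
    (k : ℕ) (hk : 1 ≤ k) (e : Fin n →₀ ℕ) (he : IsMinMonGen (I ^ k) e) :
    ∃ V : Set (Fin n),
      Submodule.colon
        (Ideal.span {w : MvPolynomial (Fin n) K |
          ∃ f : Fin n →₀ ℕ, IsMinMonGen (I ^ k) f ∧ ExpLexGT f e ∧ w = monomial f (1 : K)})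
        (Ideal.span {monomial e (1 : K)}) =
      Ideal.span ((fun s : Fin n => (X s : MvPolynomial (Fin n) K)) '' V) := by
  rw [hI, pow_eq_span] at he ⊢
  simp only [isMinMonGen_iff_s5] at he ⊢
  have hset : {w : MvPolynomial (Fin n) K |
      ∃ f : Fin n →₀ ℕ, IsGood d k f ∧ ExpLexGT f e ∧ w = monomial f (1 : K)} =
      (fun s => monomial s (1 : K)) '' {f | IsGood d k f ∧ ExpLexGT f e} := by
    ext w
    constructor
    · rintro ⟨f, h1, h2, rfl⟩
      exact ⟨f, ⟨h1, h2⟩, rfl⟩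
    · rintro ⟨f, ⟨h1, h2⟩, rfl⟩
      exact ⟨f, h1, h2, rfl⟩
  rw [hset]
  refine ⟨{s | ∃ g, IsGood d k g ∧ ExpLexGT g e ∧ g ≤ e + single s 1}, ?_⟩
  have hcolon : ∀ r : MvPolynomial (Fin n) K,
      r ∈ Submodule.colon
        (Ideal.span ((fun s => monomial s (1 : K)) '' {f | IsGood d k f ∧ ExpLexGT f e}))
        (Ideal.span {monomial e (1 : K)} : Ideal (MvPolynomial (Fin n) K)) ↔
      r * monomial e 1 ∈
        Ideal.span ((fun s => monomial s (1 : K)) '' {f | IsGood d k f ∧ ExpLexGT f e}) := by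
    intro r
    exact Ideal.mem_colon_span_singleton
  apply le_antisymm
  · intro r hr
    rw [hcolon, mem_ideal_span_monomial_image] at hr
    rw [mem_ideal_span_X_image]
    intro m hm
    obtain ⟨f, ⟨hf, hfe⟩, hle⟩ := hr (m + e) (by
      rw [mem_support_iff, coeff_mul_monomial, mul_one]
      exact mem_support_iff.mp hm)
    obtain ⟨i, g, hi, hg, hge, hgle⟩ := IsGood.exchange he hf hfe
    refine ⟨i, ⟨g, hg, hge, hgle⟩, ?_⟩
    have := hle i
    simp only [Finsupp.add_apply] at this
    omega
  · rw [Ideal.span_le]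
    rintro _ ⟨s, ⟨g, hg, hge, hgle⟩, rfl⟩
    rw [SetLike.mem_coe, hcolon, mem_ideal_span_monomial_image]
    intro m hm
    refine ⟨g, ⟨hg, hge⟩, ?_⟩
    have hm' : m = e + single s 1 := by
      simp only [X, monomial_mul, mul_one] at hm
      rw [add_comm, eq_comm]
      simpa using hm
    rw [hm']
    exact hgle
end

section
/- Let d ≥ 1, n ≥ d + 1, let Ḡ be the anti-d-path on vertex set [n] and I = I(Ḡ) = (x_i x_j : i + d < j) its edge ideal in S. Then I = ⋂_{t=1}^{n−d} P_{[n]∖{t, t+1, …, t+d}}, where for a subset A ⊆ [n], P_A denotes the prime ideal generated by the variables x_s with s ∈ A. -/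
/-!
All the ideals involved are monomial, so membership of a polynomial is decided monomial by monomial,
and only the set `T` of variables occurring in a monomial matters. The statement becomes: `T` contains
`i`, `j` with `i + d < j` if and only if `T` is contained in no window `{t, …, t + d}` with
`t < n - d` (`exists_far_pair_iff`). A window has diameter `d`, so a far pair never fits in one.
Conversely, if `T` leaves every window, then the window starting at `min T` (or, if `min T ≥ n - d`,
the last window) yields the pair.
-/

open MvPolynomial

/-- A polynomial lies in the edge ideal iff each of its monomials is divisible by two variables more
than `d` apart. These are distinct, so only the support of the monomial is involved, whereas
divisibility by `x_i ^ 2` would be a condition on exponents. -/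
lemma mem_span_edges_iff {K : Type} [Field K] {n d : ℕ} (p : MvPolynomial (Fin n) K) :
    p ∈ Ideal.span {w : MvPolynomial (Fin n) K |
      ∃ i j : Fin n, (i : ℕ) + d < (j : ℕ) ∧ w = X i * X j} ↔
    ∀ m ∈ p.support, ∃ i j : Fin n, (i : ℕ) + d < (j : ℕ) ∧ m i ≠ 0 ∧ m j ≠ 0 := by
  have hset : {w : MvPolynomial (Fin n) K |
      ∃ i j : Fin n, (i : ℕ) + d < (j : ℕ) ∧ w = X i * X j} =
      (fun s => monomial s (1 : K)) '' {s : Fin n →₀ ℕ | ∃ i j : Fin n, (i : ℕ) + d < (j : ℕ) ∧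
        s = Finsupp.single i 1 + Finsupp.single j 1} := by
    ext w
    constructor
    · rintro ⟨i, j, hij, rfl⟩
      exact ⟨_, ⟨i, j, hij, rfl⟩, by simp [X, monomial_mul]⟩
    · rintro ⟨_, ⟨i, j, hij, rfl⟩, rfl⟩
      exact ⟨i, j, hij, by simp [X, monomial_mul]⟩
  rw [hset, mem_ideal_span_monomial_image]
  refine forall₂_congr fun m _ => ?_
  constructor
  · rintro ⟨_, ⟨i, j, hij, rfl⟩, hle⟩
    have hi := hle i
    have hj := hle j
    simp only [Finsupp.add_apply, Finsupp.single_eq_same] at hi hj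
    exact ⟨i, j, hij, by omega, by omega⟩
  · rintro ⟨i, j, hij, hi, hj⟩
    refine ⟨_, ⟨i, j, hij, rfl⟩, fun k => ?_⟩
    have hne : i ≠ j := by rintro rfl; omega
    simp only [Finsupp.add_apply, Finsupp.single_apply]
    split_ifs with h1 h2 h2
    · exact absurd (h1.trans h2.symm) hne
    · subst h1; omega
    · subst h2; omega
    · omega

lemma mem_span_window_compl_iff {K : Type} [Field K] {n d t : ℕ} (p : MvPolynomial (Fin n) K) :
    p ∈ Ideal.span {w : MvPolynomial (Fin n) K |
      ∃ s : Fin n, ((s : ℕ) < t ∨ t + d < (s : ℕ)) ∧ w = X s} ↔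
    ∀ m ∈ p.support, ∃ s : Fin n, ((s : ℕ) < t ∨ t + d < (s : ℕ)) ∧ m s ≠ 0 := by
  have hset : {w : MvPolynomial (Fin n) K |
      ∃ s : Fin n, ((s : ℕ) < t ∨ t + d < (s : ℕ)) ∧ w = X s} =
      X '' {s : Fin n | (s : ℕ) < t ∨ t + d < (s : ℕ)} := by
    ext w
    simp only [Set.mem_ofPred_eq, Set.mem_image, eq_comm]
  rw [hset, mem_ideal_span_X_image]
  rfl

/-- The combinatorial core: a set of vertices contains an edge of the anti-`d`-path iff it leaves
every window `{t, …, t + d}` of `{0, …, n - 1}`. -/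
lemma exists_far_pair_iff {n d : ℕ} (hn : d + 1 ≤ n) (T : Fin n → Prop) :
    (∃ i j : Fin n, (i : ℕ) + d < (j : ℕ) ∧ T i ∧ T j) ↔
    ∀ t < n - d, ∃ s : Fin n, ((s : ℕ) < t ∨ t + d < (s : ℕ)) ∧ T s := by
  constructor
  · rintro ⟨i, j, hij, hi, hj⟩ t _
    by_cases h : (i : ℕ) < t
    · exact ⟨i, Or.inl h, hi⟩
    · exact ⟨j, Or.inr (by omega), hj⟩
  · intro h
    obtain ⟨s₀, -, hs₀⟩ := h 0 (by omega)
    obtain ⟨i, hi, hmin⟩ := WellFounded.has_min (wellFounded_lt (α := Fin n)) {s | T s} ⟨s₀, hs₀⟩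
    -- The window starting at `i = min T`, or the last one if that would stick out of `[n]`.
    obtain ⟨s, hs, hTs⟩ := h (min i (n - d - 1)) (by omega)
    have his : (i : ℕ) ≤ s := not_lt.mp (hmin s hTs)
    exact ⟨i, s, by omega, hi, hTs⟩

/-- For the edge ideal `I = (x_i x_j : i + d < j)` of the anti-`d`-path on `n` vertices,
the minimal primary decomposition of `I` is
`I = ⋂_{t=0}^{n-d-1} P_{[n] ∖ {t, …, t+d}}`, where `P_A = (x_s : s ∈ A)`.
(Vertices are indexed `0, …, n-1` here, so `t` ranges over `0, …, n-d-1`.) -/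
theorem stmt_7 {K : Type} [Field K] {n d : ℕ} (hd : 1 ≤ d) (hn : d + 1 ≤ n)
    (I : Ideal (MvPolynomial (Fin n) K))
    (hI : I = Ideal.span {w : MvPolynomial (Fin n) K |
      ∃ i j : Fin n, (i : ℕ) + d < (j : ℕ) ∧ w = X i * X j}) :
    I = ⨅ t ∈ Finset.range (n - d),
      Ideal.span {w : MvPolynomial (Fin n) K |
        ∃ s : Fin n, ((s : ℕ) < t ∨ t + d < (s : ℕ)) ∧ w = X s} := by
  subst hI
  ext p
  simp only [Submodule.mem_iInf, Finset.mem_range, mem_span_edges_iff, mem_span_window_compl_iff]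
  constructor
  · intro h t ht m hm
    exact (exists_far_pair_iff hn fun s => m s ≠ 0).mp (h m hm) t ht
  · intro h m hm
    exact (exists_far_pair_iff hn fun s => m s ≠ 0).mpr fun t ht => h t ht m hm
end

section
/- Let d ≥ 1, n ≥ d + 1, let Ḡ be the anti-d-path on vertex set [n] and I = I(Ḡ) = (x_i x_j : i + d < j) its edge ideal in S. Then the height of I equals n − d − 1, and the Krull dimension of the quotient ring S/I equals d + 1. -/
/-!
A prime `p` contains `I` exactly when the variables outside `p` contain no edge of the
anti-`d`-path. Such an independent set has diameter at most `d`, hence at most `d + 1` elements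
(`card_notMem_le`), and `{0, …, d}` is independent with exactly `d + 1` elements.

For a set `A` of variables let `varIdeal K A` be the prime generated by `A`. It is the smallest
prime containing `A` (`varIdeal_le`) and has height `|A|` (`card_le_height_varIdeal`, by adjoining
the variables one at a time, and `height_varIdeal_le`, by Krull's height theorem). A prime over `I`
contains at least `n - d - 1` variables, so its height is at least `n - d - 1`, with equality for
the prime generated by the variables of index greater than `d`.

For the dimension, `S ⧸ p` is a quotient of the polynomial ring in the at most `d + 1` variables
outside `p`, and every chain of primes over `I` is a chain of primes over its least member. This
gives `≤`; for `≥`, the ring `S ⧸ I` maps onto the polynomial ring in the first `d + 1` variables.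
-/

open MvPolynomial

/-- The height of an ideal `I`: the minimum of the heights of the prime ideals
containing `I` (the height of a prime being its height in the poset of primes). -/
noncomputable def idealHeight {R : Type} [CommRing R] (I : Ideal R) : ℕ∞ :=
  ⨅ p ∈ {p : PrimeSpectrum R | I ≤ p.asIdeal}, Order.height p

/-- The ideal generated by the variables in `A`, defined as the kernel of the map
that sets these variables to zero, so that it is visibly prime over a field. -/
noncomputable def varIdeal (K : Type) [Field K] {n : ℕ} (A : Finset (Fin n)) :
    Ideal (MvPolynomial (Fin n) K) :=
  RingHom.ker (killCompl (R := K) (Subtype.val_injective (p := fun i : Fin n => i ∉ A)))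

section

variable {K : Type} [Field K] {n d : ℕ}

instance varIdeal_isPrime (A : Finset (Fin n)) : (varIdeal K A).IsPrime :=
  RingHom.ker_isPrime _

theorem killCompl_surjective (A : Finset (Fin n)) : Function.Surjective
    (killCompl (R := K) (Subtype.val_injective (p := fun i : Fin n => i ∉ A))) :=
  fun f => ⟨rename _ f, killCompl_rename_app _ f⟩

theorem X_mem_varIdeal {A : Finset (Fin n)} {i : Fin n} :
    (X i : MvPolynomial (Fin n) K) ∈ varIdeal K A ↔ i ∈ A := by
  by_cases h : i ∈ A <;> simp [varIdeal, killCompl, h]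

/-- Modulo an ideal containing the variables in `A`, a polynomial is unchanged by setting
these variables to zero. -/
theorem mk_rename_killCompl {A : Finset (Fin n)} {p : Ideal (MvPolynomial (Fin n) K)}
    (h : ∀ i ∈ A, X i ∈ p) (f : MvPolynomial (Fin n) K) :
    Ideal.Quotient.mkₐ K p (rename Subtype.val
      (killCompl (R := K) (Subtype.val_injective (p := fun i : Fin n => i ∉ A)) f)) =
    Ideal.Quotient.mkₐ K p f := by
  have : ((Ideal.Quotient.mkₐ K p).comp (rename Subtype.val)).comp
      (killCompl (R := K) (Subtype.val_injective (p := fun i : Fin n => i ∉ A))) =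
      Ideal.Quotient.mkₐ K p := by
    ext i
    by_cases hi : i ∈ A
    · simpa [killCompl, hi] using (Ideal.Quotient.eq_zero_iff_mem.mpr (h i hi)).symm
    · have := killCompl_rename_app (R := K)
        (Subtype.val_injective (p := fun i : Fin n => i ∉ A)) (X ⟨i, hi⟩)
      rw [rename_X] at this
      simp [this]
  exact AlgHom.congr_fun this f

theorem varIdeal_le {A : Finset (Fin n)} {p : Ideal (MvPolynomial (Fin n) K)}
    (h : ∀ i ∈ A, X i ∈ p) : varIdeal K A ≤ p := by
  intro f hf
  have hzero : killCompl (R := K) (Subtype.val_injective (p := fun i : Fin n => i ∉ A)) f = 0 := hf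
  have := mk_rename_killCompl h f
  rw [hzero, map_zero, map_zero] at this
  exact Ideal.Quotient.eq_zero_iff_mem.mp this.symm

theorem card_le_height_varIdeal (A : Finset (Fin n)) :
    (A.card : ℕ∞) ≤ (varIdeal K A).height := by
  induction A using Finset.induction_on with
  | empty => simp
  | insert a A ha ih =>
    have hlt : varIdeal K A < varIdeal K (insert a A) := by
      refine lt_of_le_of_ne (varIdeal_le fun i hi => X_mem_varIdeal.mpr (by simp [hi])) ?_
      intro h
      have : (X a : MvPolynomial (Fin n) K) ∈ varIdeal K A := by
        rw [h]; exact X_mem_varIdeal.mpr (by simp)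
      exact ha (X_mem_varIdeal.mp this)
    rw [Finset.card_insert_of_notMem ha]
    push_cast
    exact (add_le_add_left ih 1).trans (Ideal.height_add_one_le_of_lt_of_isPrime hlt)

theorem height_varIdeal_le (A : Finset (Fin n)) :
    (varIdeal K A).height ≤ (A.card : ℕ∞) := by
  classical
  have hmin : varIdeal K A ∈
      (Ideal.span ((A.image X : Finset (MvPolynomial (Fin n) K)) :
        Set (MvPolynomial (Fin n) K))).minimalPrimes := by
    refine ⟨⟨inferInstance, ?_⟩, ?_⟩
    · rw [Ideal.span_le]
      intro f hf
      obtain ⟨i, hi, rfl⟩ := Finset.mem_image.mp (Finset.mem_coe.mp hf)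
      exact X_mem_varIdeal.mpr hi
    · intro q hq _
      exact varIdeal_le fun i hi => hq.2 (Ideal.subset_span (by simpa using hi))
  refine (Ideal.height_le_card_of_mem_minimalPrimes_span_finset hmin).trans ?_
  exact_mod_cast Finset.card_image_le

theorem ringKrullDim_mvPolynomial_notMem (A : Finset (Fin n)) :
    ringKrullDim (MvPolynomial {i : Fin n // i ∉ A} K) = (n - A.card : ℕ) := by
  rw [MvPolynomial.ringKrullDim_of_isNoetherianRing, ringKrullDim_eq_zero_of_field]
  simp [Fintype.card_subtype_compl]

theorem ringKrullDim_quotient_le_of_X_mem {A : Finset (Fin n)}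
    {p : Ideal (MvPolynomial (Fin n) K)} (h : ∀ i ∈ A, X i ∈ p) :
    ringKrullDim (MvPolynomial (Fin n) K ⧸ p) ≤ (n - A.card : ℕ) := by
  rw [← ringKrullDim_mvPolynomial_notMem (K := K) A]
  refine ringKrullDim_le_of_surjective
    ((Ideal.Quotient.mkₐ K p).comp (rename Subtype.val)).toRingHom fun y => ?_
  obtain ⟨f, rfl⟩ := Ideal.Quotient.mkₐ_surjective K p y
  exact ⟨_, mk_rename_killCompl h f⟩

/-- The dimension of `R ⧸ I` is bounded by the dimensions of `R ⧸ p` for `p` prime over `I`: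
a chain of primes over `I` lies over its least member. -/
theorem ringKrullDim_quotient_le_of_forall_prime {R : Type} [CommRing R] {I : Ideal R}
    {m : WithBot ℕ∞} (h : ∀ p : PrimeSpectrum R, I ≤ p.asIdeal → ringKrullDim (R ⧸ p.asIdeal) ≤ m) :
    ringKrullDim (R ⧸ I) ≤ m := by
  rw [ringKrullDim_quotient]
  refine iSup_le fun l => ?_
  refine le_trans ?_ (h l.head.1 l.head.2)
  rw [ringKrullDim_quotient]
  let chain : LTSeries (PrimeSpectrum.zeroLocus (R := R) l.head.1.asIdeal) :=
    { length := l.length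
      toFun := fun i => ⟨(l i).1, LTSeries.head_le l i⟩
      step := fun i => l.step i }
  exact le_iSup (fun l : LTSeries _ => (l.length : WithBot ℕ∞)) chain

/-- The variables outside a prime over the edge ideal form an independent set of the
anti-`d`-path, hence lie in an interval of length `d`. -/
theorem card_notMem_le {p : Ideal (MvPolynomial (Fin n) K)} [p.IsPrime]
    (h : ∀ i j : Fin n, (i : ℕ) + d < j → X i * X j ∈ p) {A : Finset (Fin n)}
    (hA : ∀ i, i ∈ A ↔ X i ∈ p) : n - A.card ≤ d + 1 := by
  have hcard : (Aᶜ).card = n - A.card := by simp [Finset.card_compl]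
  rw [← hcard]
  rcases (Aᶜ).eq_empty_or_nonempty with he | hne
  · simp [he]
  let a := (Aᶜ).min' hne
  have ha : a ∉ A := by simpa using (Aᶜ).min'_mem hne
  have hsub : (Aᶜ).map Fin.valEmbedding ⊆ Finset.Icc (a : ℕ) (a + d) := by
    intro k hk
    obtain ⟨j, hj, rfl⟩ := Finset.mem_map.mp hk
    have haj : a ≤ j := (Aᶜ).min'_le j hj
    rw [Finset.mem_compl] at hj
    refine Finset.mem_Icc.mpr ⟨haj, ?_⟩
    by_contra hlt
    rcases Ideal.IsPrime.mem_or_mem ‹p.IsPrime› (h a j (not_le.mp hlt)) with hXa | hXj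
    · exact ha ((hA a).mpr hXa)
    · exact hj ((hA j).mpr hXj)
  have := Finset.card_le_card hsub
  rw [Finset.card_map, Nat.card_Icc] at this
  omega

end

/-- For the edge ideal `I = (x_i x_j : i + d < j)` of the anti-`d`-path on `n` vertices,
the height of `I` is `n - d - 1` and the Krull dimension of `S/I` is `d + 1`. -/
theorem stmt_9 {K : Type} [Field K] {n d : ℕ} (hd : 1 ≤ d) (hn : d + 1 ≤ n)
    (I : Ideal (MvPolynomial (Fin n) K))
    (hI : I = Ideal.span {w : MvPolynomial (Fin n) K |
      ∃ i j : Fin n, (i : ℕ) + d < (j : ℕ) ∧ w = X i * X j}) :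
    idealHeight I = (n - d - 1 : ℕ) ∧
      ringKrullDim (MvPolynomial (Fin n) K ⧸ I) = (d + 1 : ℕ) := by

  classical
  -- The prime of minimal height: the one generated by the variables of index greater than `d`.
  let T : Finset (Fin n) := Finset.univ.filter fun i => d < (i : ℕ)
  have hT : T.card = n - d - 1 := by
    have hmap : T.map Fin.valEmbedding = Finset.Ioo d n := by
      ext k
      simp only [T, Finset.mem_map, Finset.mem_filter, Finset.mem_univ, true_and,
        Fin.valEmbedding_apply, Finset.mem_Ioo]
      exact ⟨fun ⟨i, hi, e⟩ => e ▸ ⟨hi, i.2⟩, fun ⟨h₁, h₂⟩ => ⟨⟨k, h₂⟩, h₁, rfl⟩⟩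
    rw [← Finset.card_map Fin.valEmbedding, hmap, Nat.card_Ioo]
  have hIT : I ≤ varIdeal K T := by
    rw [hI, Ideal.span_le]
    rintro w ⟨i, j, hij, rfl⟩
    exact Ideal.mul_mem_left _ _ (X_mem_varIdeal.mpr (by simp [T]; omega))
  have hmem : ∀ p : PrimeSpectrum (MvPolynomial (Fin n) K), I ≤ p.asIdeal →
      ∃ A : Finset (Fin n), (∀ i ∈ A, X i ∈ p.asIdeal) ∧ n - A.card ≤ d + 1 := by
    intro p hp
    refine ⟨Finset.univ.filter fun i => X i ∈ p.asIdeal, by simp, ?_⟩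
    refine card_notMem_le (p := p.asIdeal) (fun i j hij => hp ?_) (by simp)
    rw [hI]
    exact Ideal.subset_span ⟨i, j, hij, rfl⟩
  refine ⟨le_antisymm ?_ ?_, le_antisymm ?_ ?_⟩
  · refine (iInf₂_le (⟨varIdeal K T, inferInstance⟩ : PrimeSpectrum _) hIT).trans ?_
    rw [← PrimeSpectrum.height_eq_orderHeight, ← hT]
    exact height_varIdeal_le T
  · refine le_iInf₂ fun p hp => ?_
    obtain ⟨A, hA, hcard⟩ := hmem p hp
    rw [← PrimeSpectrum.height_eq_orderHeight]
    calc ((n - d - 1 : ℕ) : ℕ∞) ≤ A.card := by exact_mod_cast (by omega)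
      _ ≤ (varIdeal K A).height := card_le_height_varIdeal A
      _ ≤ p.asIdeal.height := Ideal.height_mono (varIdeal_le hA)
  · refine ringKrullDim_quotient_le_of_forall_prime fun p hp => ?_
    obtain ⟨A, hA, hcard⟩ := hmem p hp
    exact (ringKrullDim_quotient_le_of_X_mem hA).trans (by exact_mod_cast hcard)
  · have hdim := ringKrullDim_mvPolynomial_notMem (K := K) T
    rw [hT, show n - (n - d - 1) = d + 1 by omega] at hdim
    rw [← hdim]
    exact ringKrullDim_le_of_surjective
      (Ideal.Quotient.lift I (killCompl (R := K)
        (Subtype.val_injective (p := fun i : Fin n => i ∉ T))).toRingHom fun a ha => hIT ha)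
      (Ideal.Quotient.lift_surjective_of_surjective _ _ (killCompl_surjective T))
end

section
/- Let d ≥ 1, n ≥ d + 1, let Ḡ be the anti-d-path on vertex set [n] and I = I(Ḡ) = (x_i x_j : i + d < j) its edge ideal in S. Then the set of associated prime ideals of the S-module S/I is exactly { P_{[n]∖{t, t+1, …, t+d}} : 1 ≤ t ≤ n − d }, where for a subset A ⊆ [n], P_A denotes the ideal generated by the variables x_s with s ∈ A. -/
/-!
The maximal independent sets of the anti-`d`-path are the windows `{t, …, t + d}`, so the edge ideal
`I` is the intersection of the monomial primes `P_t` generated by the variables outside the window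
(`mem_edgeIdeal_iff`). If a prime `P` equals `I : m`, then `P` contains the finite intersection of
those `P_t` with `m ∉ P_t`, hence one of them, and that one also contains `P`. Conversely
`P_t = I : x_t x_{t+d}`: a vertex below `t` is adjacent to `t + d`, one above `t + d` is adjacent
to `t`, and neither `x_t` nor `x_{t+d}` lies in the prime ideal `P_t ⊇ I`.
-/

open MvPolynomial

/-- An ideal generated by variables is prime: it is the kernel of the substitution that sends
these variables to zero and fixes the others. -/
lemma isPrime_span_X_image {σ K : Type*} [Field K] (A : Set σ) :
    (Ideal.span (X '' A : Set (MvPolynomial σ K))).IsPrime := by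
  classical
  set J := Ideal.span (X '' A : Set (MvPolynomial σ K)) with hJ
  let φ : MvPolynomial σ K →ₐ[K] MvPolynomial σ K := aeval fun i => if i ∈ A then 0 else X i
  -- Modulo `J` the substitution is the identity, so its kernel is contained in `J`.
  have hφ : (Ideal.Quotient.mkₐ K J).comp φ = Ideal.Quotient.mkₐ K J := by
    apply MvPolynomial.algHom_ext
    intro i
    by_cases hi : i ∈ A
    · have : (X i : MvPolynomial σ K) ∈ J := Ideal.subset_span ⟨i, hi, rfl⟩
      simp [φ, hi, Ideal.Quotient.eq_zero_iff_mem.mpr this, Ideal.Quotient.mkₐ_eq_mk]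
    · simp [φ, hi]
  have hker : J = RingHom.ker φ := by
    apply le_antisymm
    · rw [hJ, Ideal.span_le]
      rintro _ ⟨i, hi, rfl⟩
      simp [φ, hi, RingHom.mem_ker]
    · intro f hf
      have h := DFunLike.congr_fun hφ f
      rw [RingHom.mem_ker] at hf
      simp only [AlgHom.comp_apply, hf, map_zero] at h
      exact Ideal.Quotient.eq_zero_iff_mem.mp h.symm
  rw [hker]
  exact RingHom.ker_isPrime φ

/-- The ideal `P_{[n] ∖ {t, …, t+d}}`, with vertices numbered from `0`. -/
noncomputable def windowIdeal (K : Type) [Field K] (n d t : ℕ) : Ideal (MvPolynomial (Fin n) K) :=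
  Ideal.span {w | ∃ s : Fin n, ((s : ℕ) < t ∨ t + d < (s : ℕ)) ∧ w = X s}

/-- The edge ideal of the anti-`d`-path, with vertices numbered from `0`. -/
noncomputable def edgeIdeal (K : Type) [Field K] (n d : ℕ) : Ideal (MvPolynomial (Fin n) K) :=
  Ideal.span {w | ∃ i j : Fin n, (i : ℕ) + d < (j : ℕ) ∧ w = X i * X j}

section

variable {K : Type} [Field K] {n d : ℕ}

lemma windowIdeal_eq (t : ℕ) : windowIdeal K n d t =
    Ideal.span (X '' {s : Fin n | (s : ℕ) < t ∨ t + d < (s : ℕ)}) := by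
  unfold windowIdeal
  congr 1
  ext w
  simp [eq_comm]

lemma windowIdeal_isPrime (t : ℕ) : (windowIdeal K n d t).IsPrime := by
  rw [windowIdeal_eq]
  exact isPrime_span_X_image _

lemma mem_windowIdeal {t : ℕ} {f : MvPolynomial (Fin n) K} : f ∈ windowIdeal K n d t ↔
    ∀ m ∈ f.support, ∃ s : Fin n, ((s : ℕ) < t ∨ t + d < (s : ℕ)) ∧ m s ≠ 0 := by
  rw [windowIdeal_eq, mem_ideal_span_X_image]
  rfl

lemma X_notMem_windowIdeal {t : ℕ} {s : Fin n} (h1 : t ≤ s) (h2 : (s : ℕ) ≤ t + d) :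
    (X s : MvPolynomial (Fin n) K) ∉ windowIdeal K n d t := by
  rw [mem_windowIdeal]
  intro h
  obtain ⟨r, hr, hne⟩ := h (Finsupp.single s 1) (by simp [support_X])
  have hrs : s = r := by
    by_contra hc
    exact hne (Finsupp.single_eq_of_ne' hc)
  subst hrs
  omega

lemma edgeIdeal_le_windowIdeal (t : ℕ) : edgeIdeal K n d ≤ windowIdeal K n d t := by
  rw [edgeIdeal, Ideal.span_le]
  rintro _ ⟨i, j, hij, rfl⟩
  by_cases hi : (i : ℕ) < t
  · exact Ideal.mul_mem_right _ _ (Ideal.subset_span ⟨i, Or.inl hi, rfl⟩)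
  · exact Ideal.mul_mem_left _ _ (Ideal.subset_span ⟨j, Or.inr (by omega), rfl⟩)

lemma mem_edgeIdeal_of_support {f : MvPolynomial (Fin n) K}
    (h : ∀ m ∈ f.support, ∃ i j : Fin n, (i : ℕ) + d < (j : ℕ) ∧ m i ≠ 0 ∧ m j ≠ 0) :
    f ∈ edgeIdeal K n d := by
  rw [f.as_sum]
  refine Ideal.sum_mem _ fun m hm => ?_
  obtain ⟨i, j, hij, hi, hj⟩ := h m hm
  have hdvd : (X i * X j : MvPolynomial (Fin n) K) ∣ monomial m (coeff m f) := by
    rw [X, X, monomial_mul, monomial_dvd_monomial]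
    refine ⟨Or.inr ?_, by simp⟩
    intro s
    have hne : i ≠ j := by
      rintro rfl
      omega
    by_cases h1 : i = s
    · subst h1
      simp [Finsupp.single_eq_of_ne hne]
      omega
    · by_cases h2 : j = s
      · subst h2
        simp [Finsupp.single_eq_of_ne' hne]
        omega
      · simp [Finsupp.single_eq_of_ne' h1, Finsupp.single_eq_of_ne' h2]
  exact Ideal.mem_of_dvd _ hdvd (Ideal.subset_span ⟨i, j, hij, rfl⟩)

/-- A set of vertices without edges lies in a window: the window starting at its least element,
shifted down to `n - d - 1` when it would leave the vertex set. -/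
lemma exists_window (hn : d + 1 ≤ n) (A : Finset (Fin n))
    (h : ∀ i ∈ A, ∀ j ∈ A, (j : ℕ) ≤ i + d) :
    ∃ t, t + d + 1 ≤ n ∧ ∀ s ∈ A, t ≤ (s : ℕ) ∧ (s : ℕ) ≤ t + d := by
  rcases A.eq_empty_or_nonempty with rfl | hA
  · exact ⟨0, by omega, by simp⟩
  · refine ⟨min (A.min' hA : ℕ) (n - d - 1), by omega, fun s hs => ?_⟩
    have h1 : (A.min' hA : ℕ) ≤ s := A.min'_le s hs
    have h2 := h _ (A.min'_mem hA) s hs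
    have h3 := s.isLt
    omega

/-- The edge ideal is the intersection of the window primes. -/
lemma mem_edgeIdeal_iff (hn : d + 1 ≤ n) {f : MvPolynomial (Fin n) K} :
    f ∈ edgeIdeal K n d ↔ ∀ t, t + d + 1 ≤ n → f ∈ windowIdeal K n d t := by
  refine ⟨fun h t _ => edgeIdeal_le_windowIdeal t h, fun h => ?_⟩
  apply mem_edgeIdeal_of_support
  intro m hm
  by_contra! hc
  obtain ⟨t, ht, hw⟩ := exists_window hn m.support fun i hi j hj => by
    by_contra! hlt
    exact Finsupp.mem_support_iff.mp hj (hc i j hlt (Finsupp.mem_support_iff.mp hi))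
  obtain ⟨s, hs, hne⟩ := mem_windowIdeal.mp (h t ht) m hm
  have := hw s (Finsupp.mem_support_iff.mpr hne)
  omega

lemma mem_associatedPrimes_quotient_iff {R : Type*} [CommRing R] [IsNoetherianRing R]
    {I P : Ideal R} : P ∈ associatedPrimes R (R ⧸ I) ↔
      P.IsPrime ∧ ∃ m : R, ∀ f, f ∈ P ↔ f * m ∈ I := by
  rw [AssociatedPrimes.mem_iff, isAssociatedPrime_iff]
  refine and_congr_right fun _ => ?_
  have key (m f : R) : f ∈ (⊥ : Submodule R (R ⧸ I)).colon {Ideal.Quotient.mk I m} ↔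
      f * m ∈ I := by
    rw [Submodule.mem_colon_singleton, Submodule.mem_bot, ← Ideal.Quotient.eq_zero_iff_mem, map_mul]
    rfl
  constructor
  · rintro ⟨x, rfl⟩
    obtain ⟨m, rfl⟩ := Ideal.Quotient.mk_surjective x
    exact ⟨m, key m⟩
  · rintro ⟨m, hm⟩
    exact ⟨Ideal.Quotient.mk I m, Ideal.ext fun f => (hm f).trans (key m f).symm⟩

lemma exists_eq_windowIdeal (hn : d + 1 ≤ n) {P : Ideal (MvPolynomial (Fin n) K)}
    (hP : P.IsPrime) {m : MvPolynomial (Fin n) K}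
    (hm : ∀ f, f ∈ P ↔ f * m ∈ edgeIdeal K n d) :
    ∃ t, t + d + 1 ≤ n ∧ P = windowIdeal K n d t := by
  classical
  let T := (Finset.range n).filter fun t => t + d + 1 ≤ n ∧ m ∉ windowIdeal K n d t
  have hle : T.inf (windowIdeal K n d) ≤ P := by
    intro f hf
    rw [Submodule.mem_finsetInf] at hf
    rw [hm, mem_edgeIdeal_iff hn]
    intro t ht
    by_cases hmt : m ∈ windowIdeal K n d t
    · exact Ideal.mul_mem_left _ _ hmt
    · exact Ideal.mul_mem_right _ _
        (hf t (Finset.mem_filter.mpr ⟨Finset.mem_range.mpr (by omega), ht, hmt⟩))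
  obtain ⟨t, htT, htP⟩ := hP.inf_le'.mp hle
  obtain ⟨-, ht, hmt⟩ := Finset.mem_filter.mp htT
  refine ⟨t, ht, le_antisymm (fun f hf => ?_) htP⟩
  exact ((windowIdeal_isPrime t).mem_or_mem
    (edgeIdeal_le_windowIdeal t ((hm f).mp hf))).resolve_right hmt

/-- `P_t = I : x_t x_{t+d}`. -/
lemma mem_windowIdeal_iff_mul_mem {t : ℕ} (ht : t + d + 1 ≤ n) (f : MvPolynomial (Fin n) K) :
    f ∈ windowIdeal K n d t ↔
      f * (X ⟨t, by omega⟩ * X ⟨t + d, by omega⟩) ∈ edgeIdeal K n d := by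
  constructor
  · intro hf
    have hle : windowIdeal K n d t ≤
        (edgeIdeal K n d).colon {X ⟨t, by omega⟩ * X ⟨t + d, by omega⟩} := by
      rw [windowIdeal, Ideal.span_le]
      rintro _ ⟨s, hs | hs, rfl⟩
      · have : (X s * X ⟨t + d, by omega⟩ : MvPolynomial (Fin n) K) ∈ edgeIdeal K n d :=
          Ideal.subset_span ⟨s, ⟨t + d, by omega⟩, Nat.add_lt_add_right hs d, rfl⟩
        rw [SetLike.mem_coe, Submodule.mem_colon_singleton, smul_eq_mul, mul_left_comm]
        exact Ideal.mul_mem_left _ _ this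
      · have : (X ⟨t, by omega⟩ * X s : MvPolynomial (Fin n) K) ∈ edgeIdeal K n d :=
          Ideal.subset_span ⟨⟨t, by omega⟩, s, hs, rfl⟩
        rw [SetLike.mem_coe, Submodule.mem_colon_singleton, smul_eq_mul, ← mul_assoc,
          mul_comm (X s)]
        exact Ideal.mul_mem_right _ _ this
    exact Submodule.mem_colon_singleton.mp (hle hf)
  · intro hf
    have hp := windowIdeal_isPrime (K := K) (n := n) (d := d) t
    refine (hp.mem_or_mem (edgeIdeal_le_windowIdeal t hf)).resolve_right fun h => ?_
    rcases hp.mem_or_mem h with h | h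
    · exact X_notMem_windowIdeal (by simp) (by simp) h
    · exact X_notMem_windowIdeal (by simp) (by simp) h

end

/-- For the edge ideal `I = (x_i x_j : i + d < j)` of the anti-`d`-path on `n` vertices,
the associated primes of `S/I` are exactly the prime ideals
`P_{[n] ∖ {t, …, t+d}} = (x_s : s < t or s > t + d)` for `0 ≤ t ≤ n - d - 1`
(vertices indexed `0, …, n-1`). -/
theorem stmt_11 {K : Type} [Field K] {n d : ℕ} (hd : 1 ≤ d) (hn : d + 1 ≤ n)
    (I : Ideal (MvPolynomial (Fin n) K))
    (hI : I = Ideal.span {w : MvPolynomial (Fin n) K |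
      ∃ i j : Fin n, (i : ℕ) + d < (j : ℕ) ∧ w = X i * X j}) :
    associatedPrimes (MvPolynomial (Fin n) K) (MvPolynomial (Fin n) K ⧸ I) =
      {P : Ideal (MvPolynomial (Fin n) K) | ∃ t : ℕ, t + d + 1 ≤ n ∧
        P = Ideal.span {w : MvPolynomial (Fin n) K |
          ∃ s : Fin n, ((s : ℕ) < t ∨ t + d < (s : ℕ)) ∧ w = X s}} := by
  subst hI
  ext P
  refine (mem_associatedPrimes_quotient_iff (I := edgeIdeal K n d)).trans ⟨?_, ?_⟩
  · rintro ⟨hP, m, hm⟩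
    exact exists_eq_windowIdeal hn hP hm
  · rintro ⟨t, ht, rfl⟩
    exact ⟨windowIdeal_isPrime t, _, mem_windowIdeal_iff_mul_mem ht⟩
end

section
/- Let d ≥ 1 and d + 2 ≤ n ≤ 2d + 2, let Ḡ be the anti-d-path on vertex set [n] and I = I(Ḡ) = (x_i x_j : i + d < j) its edge ideal in S. Then I is normally torsion-free: for every integer k ≥ 1, the set of associated prime ideals of S/I^k equals the set of associated prime ideals of S/I. -/
/-!
The hypothesis `n ≤ 2d + 2` forces the graph to be bipartite, and its minimal vertex covers are the
complements `cover d t` of the windows `{t, …, t + d}` with `t + d + 1 ≤ n`. The point is the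
equality `I ^ k = ⋂ₜ Q t k` (`edge_pow_eq_inf`), where `Q t k` is the ideal of polynomials all of
whose monomials have degree at least `k` in the variables of `cover d t`.

The ideal `Q t k` is realised as the preimage of `(T ^ k)` under the homomorphism `S → S[T]`
multiplying each variable of the cover by `T`; since `T` is prime, `Q t 1` is prime and `Q t k` is
`Q t 1`-primary. The inclusion `I ^ k ≤ Q t k` is then immediate, and the reverse one is a
statement on monomials (`monomial_mem_pow`), proved by induction on `k`: given a monomial whose
degree along every cover is at least `k`, pick `i` in its support having a neighbour `j > i + d` in
the support, with `j` the smallest such. Dividing by `x_i x_j` lowers the degree along `cover d t`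
by two only if `i < t` and `t + d < j`, and minimality of `j` makes the degree along such a cover
strictly larger than the one along `cover d i`, hence at least `k + 1`.

As the primes `Q t 1` are pairwise incomparable, this primary decomposition shows that the
associated primes of `S / I ^ k` are exactly the `Q t 1`, for every `k ≥ 1`
(`associatedPrimes_quotient_eq`).
-/

open MvPolynomial

/-- The complement of the window `{t, …, t + d}` in `Fin n`. -/
def cover {n : ℕ} (d t : ℕ) : Finset (Fin n) :=
  Finset.univ.filter fun v => (v : ℕ) < t ∨ t + d < (v : ℕ)

lemma mem_cover {n d t : ℕ} {v : Fin n} : v ∈ cover d t ↔ (v : ℕ) < t ∨ t + d < (v : ℕ) := by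
  simp [cover]

/-- A finite intersection of ideals `Q t`, primary to pairwise incomparable primes `P t`, has
exactly the `P t` as associated primes. -/
lemma associatedPrimes_quotient_eq {R ι : Type*} [CommRing R] [IsNoetherianRing R]
    (J : Ideal R) (s : Finset ι) (P Q : ι → Ideal R) (k : ℕ)
    (hP : ∀ t ∈ s, (P t).IsPrime) (hPQ : ∀ t ∈ s, P t ^ k ≤ Q t) (hQP : ∀ t ∈ s, Q t ≤ P t)
    (hprim : ∀ t ∈ s, ∀ f g, g * f ∈ Q t → f ∉ Q t → g ∈ P t)
    (hinc : ∀ t ∈ s, ∀ u ∈ s, P t ≤ P u → t = u)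
    (hJ : J = s.inf Q) :
    associatedPrimes R (R ⧸ J) = P '' (s : Set ι) := by
  ext p
  constructor
  · intro hp
    rw [AssociatedPrimes.mem_iff, isAssociatedPrime_iff] at hp
    obtain ⟨hp, x, hx⟩ := hp
    obtain ⟨f, rfl⟩ := Ideal.Quotient.mk_surjective x
    have hmem : ∀ g, g ∈ p ↔ ∀ t ∈ s, g * f ∈ Q t := by
      intro g
      rw [hx, Submodule.mem_colon_singleton, Submodule.mem_bot, ← Ideal.Quotient.mk_eq_mk,
        ← Submodule.Quotient.mk_smul, Submodule.Quotient.mk_eq_zero, hJ, Submodule.mem_finsetInf,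
        smul_eq_mul]
    have hle : s.inf (fun t => (Q t).colon {f}) ≤ p := by
      intro g hg
      rw [Submodule.mem_finsetInf] at hg
      rw [hmem]
      intro t ht
      simpa [Submodule.mem_colon_singleton] using hg t ht
    obtain ⟨t, ht, htp⟩ := (Ideal.IsPrime.inf_le' hp).1 hle
    have hmem' : ∀ g, g * f ∈ Q t → g ∈ p := fun g hg =>
      htp (by simpa [Submodule.mem_colon_singleton] using hg)
    refine ⟨t, ht, le_antisymm (fun g hg => ?_) (fun g hg => ?_)⟩
    · exact hp.mem_of_pow_mem k
        (hmem' _ (Ideal.mul_mem_right _ _ (hPQ t ht (Ideal.pow_mem_pow hg k))))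
    · refine hprim t ht f g ((hmem g).1 hg t ht) fun hf => ?_
      exact hp.ne_top ((Ideal.eq_top_iff_one _).2 (hmem' 1 (by simpa using hf)))
  · rintro ⟨t, ht, rfl⟩
    apply Module.associatedPrimes.minimalPrimes_annihilator_subset_associatedPrimes
    rw [Ideal.annihilator_quotient]
    refine ⟨⟨hP t ht, hJ ▸ (Finset.inf_le ht).trans (hQP t ht)⟩, ?_⟩
    rintro q ⟨hq, hJq⟩ hqt
    rw [hJ] at hJq
    obtain ⟨u, hu, huq⟩ := (Ideal.IsPrime.inf_le' hq).1 hJq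
    have huq' : P u ≤ q := fun g hg =>
      hq.mem_of_pow_mem k (huq (hPQ u hu (Ideal.pow_mem_pow hg k)))
    have := hinc u hu t ht (huq'.trans hqt)
    subst this
    exact huq'

section Scaling

variable {K σ : Type*} [Field K] [DecidableEq σ]

/-- The homomorphism `S → S[T]` multiplying each variable in `C` by `T`. -/
noncomputable def scaleHom (C : Finset σ) :
    MvPolynomial σ K →ₐ[K] Polynomial (MvPolynomial σ K) :=
  aeval fun v => (Polynomial.X : Polynomial (MvPolynomial σ K)) ^ (if v ∈ C then 1 else 0) *
    Polynomial.C (X v)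

/-- The ideal of polynomials whose order of vanishing in the variables of `C` is at least `k`. -/
noncomputable def orderIdeal (K : Type*) [Field K] (C : Finset σ) (k : ℕ) :
    Ideal (MvPolynomial σ K) :=
  (Ideal.span {(Polynomial.X : Polynomial (MvPolynomial σ K)) ^ k}).comap (scaleHom C)

lemma mem_orderIdeal {C : Finset σ} {k : ℕ} {f : MvPolynomial σ K} :
    f ∈ orderIdeal K C k ↔ Polynomial.X ^ k ∣ scaleHom C f := by
  rw [orderIdeal, Ideal.mem_comap, Ideal.mem_span_singleton]

lemma scaleHom_monomial (C : Finset σ) (m : σ →₀ ℕ) (a : K) :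
    scaleHom C (monomial m a) =
      Polynomial.X ^ (∑ v ∈ C, m v) * Polynomial.C (monomial m a) := by
  have h1 : (∑ v ∈ C, m v) = m.sum fun v e => (if v ∈ C then 1 else 0) * e := by
    rw [Finsupp.sum]
    simp only [ite_mul, one_mul, zero_mul]
    rw [← Finset.sum_filter, Finset.filter_mem_eq_inter, Finset.inter_comm]
    refine (Finset.sum_subset Finset.inter_subset_left ?_).symm
    intro v hv hv'
    by_contra h
    exact hv' (Finset.mem_inter.2 ⟨hv, Finsupp.mem_support_iff.2 h⟩)
  rw [scaleHom, aeval_monomial, h1, monomial_eq, Finsupp.prod, Finsupp.prod, Finsupp.sum,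
    ← Finset.prod_pow_eq_pow_sum, map_mul, map_prod]
  simp only [mul_pow, ← pow_mul, Finset.prod_mul_distrib, map_pow]
  rw [show (algebraMap K (Polynomial (MvPolynomial σ K))) a =
    Polynomial.C (MvPolynomial.C a) from rfl]
  ring

lemma coeff_scaleHom (C : Finset σ) (f : MvPolynomial σ K) (m : σ →₀ ℕ) (j : ℕ) :
    coeff m ((scaleHom C f).coeff j) = if ∑ v ∈ C, m v = j then coeff m f else 0 := by
  induction f using MvPolynomial.induction_on' with
  | monomial u a =>
    rw [scaleHom_monomial, Polynomial.coeff_X_pow_mul', coeff_monomial]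
    by_cases hu : u = m
    · subst hu
      rw [Polynomial.coeff_C, if_pos rfl]
      split_ifs <;> first | omega | simp
    · rw [Polynomial.coeff_C]
      split_ifs <;> simp [coeff_monomial, hu]
  | add p q hp hq =>
    rw [map_add, Polynomial.coeff_add, coeff_add, hp, hq, coeff_add]
    split_ifs <;> simp

lemma le_of_mem_orderIdeal {C : Finset σ} {k : ℕ} {f : MvPolynomial σ K}
    (hf : f ∈ orderIdeal K C k) {m : σ →₀ ℕ} (hm : m ∈ f.support) : k ≤ ∑ v ∈ C, m v := by
  rw [mem_orderIdeal, Polynomial.X_pow_dvd_iff] at hf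
  by_contra! h
  have h1 := coeff_scaleHom C f m (∑ v ∈ C, m v)
  rw [hf _ h, if_pos rfl, coeff_zero] at h1
  exact mem_support_iff.1 hm h1.symm

lemma X_mem_orderIdeal_one {C : Finset σ} {v : σ} :
    (X v : MvPolynomial σ K) ∈ orderIdeal K C 1 ↔ v ∈ C := by
  constructor
  · intro h
    have h1 := le_of_mem_orderIdeal h (m := Finsupp.single v 1) (by simp [support_X])
    by_contra hv
    simp [Finsupp.single_apply, hv] at h1
  · intro h
    rw [mem_orderIdeal, scaleHom, aeval_X, if_pos h]
    exact Dvd.intro _ rfl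

lemma orderIdeal_one_isPrime (C : Finset σ) : (orderIdeal K C 1).IsPrime := by
  have : (Ideal.span {(Polynomial.X : Polynomial (MvPolynomial σ K)) ^ 1}).IsPrime := by
    rw [pow_one]
    exact (Ideal.span_singleton_prime Polynomial.X_ne_zero).2 Polynomial.prime_X
  exact Ideal.comap_isPrime _ _

lemma orderIdeal_one_pow_le (C : Finset σ) (k : ℕ) : orderIdeal K C 1 ^ k ≤ orderIdeal K C k := by
  refine (Ideal.le_comap_pow _ k).trans ?_
  rw [Ideal.span_singleton_pow, pow_one, orderIdeal]

lemma orderIdeal_primary (C : Finset σ) (k : ℕ) (f g : MvPolynomial σ K)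
    (h : g * f ∈ orderIdeal K C k) (hf : f ∉ orderIdeal K C k) : g ∈ orderIdeal K C 1 := by
  by_contra hg
  rw [mem_orderIdeal] at h hf hg
  rw [pow_one] at hg
  rw [map_mul] at h
  exact hf (Polynomial.prime_X.pow_dvd_of_dvd_mul_left k hg h)

end Scaling

/-- If the cover degrees of `e` are all positive, its support contains an edge; the edge is taken
with upper end `j` nearest to its lower end `i`. -/
lemma exists_nearest_edge {n d : ℕ} (hn1 : d + 2 ≤ n) (e : Fin n →₀ ℕ)
    (he : ∀ t, t + d + 1 ≤ n → 1 ≤ ∑ v ∈ cover d t, e v) :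
    ∃ i j : Fin n, (i : ℕ) + d < j ∧ e i ≠ 0 ∧ e j ≠ 0 ∧
      ∀ v : Fin n, (i : ℕ) + d < v → v < j → e v = 0 := by
  have hpos : ∀ t, t + d + 1 ≤ n → ∃ v : Fin n, ((v : ℕ) < t ∨ t + d < (v : ℕ)) ∧ e v ≠ 0 := by
    intro t ht
    obtain ⟨v, hv, hv'⟩ := Finset.exists_ne_zero_of_sum_ne_zero (Nat.one_le_iff_ne_zero.1 (he t ht))
    exact ⟨v, mem_cover.1 hv, hv'⟩
  obtain ⟨v₀, -, hv₀⟩ := hpos 0 (by omega)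
  -- The lower end `i` is the least element of the support.
  obtain ⟨i, hi, himin⟩ := Finset.exists_min_image e.support (fun v => (v : ℕ))
    ⟨v₀, Finsupp.mem_support_iff.2 hv₀⟩
  have himin' : ∀ v, e v ≠ 0 → (i : ℕ) ≤ v := fun v hv => himin v (Finsupp.mem_support_iff.2 hv)
  have hin : (i : ℕ) + d + 1 ≤ n := by
    by_contra hcon
    obtain ⟨v, hv, hv'⟩ := hpos (n - d - 1) (by omega)
    have := himin' v hv'
    have := v.2
    omega
  obtain ⟨w, hw, hw'⟩ := hpos i hin
  have hiw := himin' w hw'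
  obtain ⟨j, hj, hjmin⟩ := Finset.exists_min_image
    (e.support.filter fun v : Fin n => (i : ℕ) + d < v) (fun v => (v : ℕ))
    ⟨w, Finset.mem_filter.2 ⟨Finsupp.mem_support_iff.2 hw', by omega⟩⟩
  rw [Finset.mem_filter, Finsupp.mem_support_iff] at hj
  refine ⟨i, j, hj.2, Finsupp.mem_support_iff.1 hi, hj.1, fun v hv hvj => ?_⟩
  by_contra hne
  have := hjmin v (Finset.mem_filter.2 ⟨Finsupp.mem_support_iff.2 hne, hv⟩)
  exact absurd hvj (by simpa using this)

/-- A monomial whose degree along every cover is at least `k` is divisible by a product of `k`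
edges. -/
lemma monomial_mem_pow {K : Type*} [Field K] {n d : ℕ} (hn1 : d + 2 ≤ n) (hn2 : n ≤ 2 * d + 2)
    (I : Ideal (MvPolynomial (Fin n) K))
    (hI : ∀ i j : Fin n, (i : ℕ) + d < (j : ℕ) → X i * X j ∈ I) (k : ℕ) :
    ∀ e : Fin n →₀ ℕ, (∀ t, t + d + 1 ≤ n → k ≤ ∑ v ∈ cover d t, e v) →
      monomial e (1 : K) ∈ I ^ k := by
  induction k with
  | zero => simp
  | succ k ih =>
    intro e he
    obtain ⟨i, j, hij, hi, hj, hmin⟩ := exists_nearest_edge hn1 e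
      fun t ht => le_trans (by omega) (he t ht)
    have hne : i ≠ j := by rintro rfl; omega
    obtain ⟨e', rfl⟩ : ∃ e', e = e' + (Finsupp.single i 1 + Finsupp.single j 1) := by
      refine ⟨e - (Finsupp.single i 1 + Finsupp.single j 1), (tsub_add_cancel_of_le ?_).symm⟩
      intro v
      by_cases h1 : v = i
      · subst h1
        simp [hne.symm]
        omega
      · by_cases h2 : v = j
        · subst h2
          simp [hne]
          omega
        · simp [Ne.symm h1, Ne.symm h2]
    have hmul : monomial (e' + (Finsupp.single i 1 + Finsupp.single j 1)) (1 : K) =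
        monomial e' 1 * (X i * X j) := by
      simp [X, monomial_mul]
    rw [hmul, pow_succ]
    refine Ideal.mul_mem_mul (ih e' fun t ht => ?_) (hI i j hij)
    have hsum : ∀ t, ∑ v ∈ cover d t, (e' + (Finsupp.single i 1 + Finsupp.single j 1) : Fin n →₀ ℕ) v =
        ∑ v ∈ cover d t, e' v + ((if i ∈ cover d t then 1 else 0) +
          if j ∈ cover d t then 1 else 0) := by
      intro t
      simp [Finset.sum_add_distrib, Finsupp.single_apply]
    have h1 := he t ht
    by_cases hbad : i ∈ cover d t ∧ j ∈ cover d t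
    · -- Bipartiteness leaves only the case where the window lies strictly between `i` and `j`.
      have hit : (i : ℕ) < t ∧ t + d < j := by
        have h2 := mem_cover.1 hbad.1
        have h3 := mem_cover.1 hbad.2
        have := j.2
        omega
      have hnot : i ∉ cover d (i : ℕ) := by rw [mem_cover]; omega
      have hle : ∑ v ∈ insert i (cover d (i : ℕ)),
          (e' + (Finsupp.single i 1 + Finsupp.single j 1) : Fin n →₀ ℕ) v ≤
          ∑ v ∈ cover d t, (e' + (Finsupp.single i 1 + Finsupp.single j 1) : Fin n →₀ ℕ) v := by
        refine Finset.sum_le_sum_of_ne_zero fun v hv hv0 => ?_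
        rw [mem_cover]
        rcases Finset.mem_insert.1 hv with rfl | hv
        · omega
        · rw [mem_cover] at hv
          by_contra hcon
          refine hv0 (hmin v (by omega) ?_)
          rw [Fin.lt_def]
          omega
      rw [Finset.sum_insert hnot] at hle
      have h4 := he i (by omega)
      have h5 := hsum t
      rw [if_pos hbad.1, if_pos hbad.2] at h5
      omega
    · rw [hsum] at h1
      split_ifs at h1 <;> first | omega | tauto

lemma edge_pow_eq_inf {K : Type*} [Field K] {n d : ℕ} (hn1 : d + 2 ≤ n) (hn2 : n ≤ 2 * d + 2)
    (I : Ideal (MvPolynomial (Fin n) K))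
    (hI : I = Ideal.span {w : MvPolynomial (Fin n) K |
      ∃ i j : Fin n, (i : ℕ) + d < (j : ℕ) ∧ w = X i * X j}) (k : ℕ) :
    I ^ k = (Finset.range (n - d)).inf fun t => orderIdeal K (cover d t) k := by
  apply le_antisymm
  · refine Finset.le_inf fun t _ => (Ideal.pow_right_mono ?_ k).trans (orderIdeal_one_pow_le _ k)
    rw [hI, Ideal.span_le]
    rintro _ ⟨i, j, hij, rfl⟩
    by_cases h : i ∈ cover d t
    · exact Ideal.mul_mem_right _ _ (X_mem_orderIdeal_one.2 h)
    · refine Ideal.mul_mem_left _ _ (X_mem_orderIdeal_one.2 ?_)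
      rw [mem_cover] at h ⊢
      omega
  · intro f hf
    rw [Submodule.mem_finsetInf] at hf
    rw [f.as_sum]
    refine Ideal.sum_mem _ fun m hm => ?_
    rw [← mul_one (coeff m f), ← C_mul_monomial]
    refine Ideal.mul_mem_left _ _ (monomial_mem_pow hn1 hn2 I ?_ k m fun t ht => ?_)
    · intro i j hij
      rw [hI]
      exact Ideal.subset_span ⟨i, j, hij, rfl⟩
    · exact le_of_mem_orderIdeal (hf t (Finset.mem_range.2 (by omega))) hm

lemma associatedPrimes_edge_pow {K : Type*} [Field K] {n d : ℕ} (hn1 : d + 2 ≤ n)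
    (hn2 : n ≤ 2 * d + 2) (I : Ideal (MvPolynomial (Fin n) K))
    (hI : I = Ideal.span {w : MvPolynomial (Fin n) K |
      ∃ i j : Fin n, (i : ℕ) + d < (j : ℕ) ∧ w = X i * X j}) (k : ℕ) (hk : 1 ≤ k) :
    associatedPrimes (MvPolynomial (Fin n) K) (MvPolynomial (Fin n) K ⧸ I ^ k) =
      (fun t => orderIdeal K (cover d t) 1) '' (Finset.range (n - d) : Set ℕ) := by
  refine associatedPrimes_quotient_eq _ _ _ (fun t => orderIdeal K (cover d t) k) k
    (fun t _ => orderIdeal_one_isPrime _) (fun t _ => orderIdeal_one_pow_le _ k)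
    (fun t _ f hf => ?_) (fun t _ => orderIdeal_primary _ k) (fun t ht u hu htu => ?_)
    (edge_pow_eq_inf hn1 hn2 I hI k)
  · rw [mem_orderIdeal] at hf ⊢
    exact (pow_dvd_pow _ hk).trans hf
  · rw [Finset.mem_range] at ht hu
    have key : ∀ v : Fin n, v ∈ cover d t → v ∈ cover d u := fun v hv =>
      X_mem_orderIdeal_one.1 (htu (X_mem_orderIdeal_one.2 hv))
    simp only [mem_cover] at key
    -- A vertex of the window at `u` outside the window at `t` separates the two covers.
    rcases lt_trichotomy t u with h | h | h
    · have := key ⟨t + d + 1, by omega⟩ (by simp)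
      simp only at this
      omega
    · exact h
    · have := key ⟨u, by omega⟩ (by simp [h])
      simp only at this
      omega

/-- If `d + 2 ≤ n ≤ 2d + 2`, the edge ideal `I = (x_i x_j : i + d < j)` of the
anti-`d`-path on `n` vertices is normally torsion-free: for every `k ≥ 1`, the
associated primes of `S/I^k` coincide with those of `S/I`. -/
theorem stmt_12 {K : Type} [Field K] {n d : ℕ} (hd : 1 ≤ d)
    (hn1 : d + 2 ≤ n) (hn2 : n ≤ 2 * d + 2)
    (I : Ideal (MvPolynomial (Fin n) K))
    (hI : I = Ideal.span {w : MvPolynomial (Fin n) K |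
      ∃ i j : Fin n, (i : ℕ) + d < (j : ℕ) ∧ w = X i * X j})
    (k : ℕ) (hk : 1 ≤ k) :
    associatedPrimes (MvPolynomial (Fin n) K) (MvPolynomial (Fin n) K ⧸ I ^ k) =
      associatedPrimes (MvPolynomial (Fin n) K) (MvPolynomial (Fin n) K ⧸ I) := by
  have h1 := associatedPrimes_edge_pow hn1 hn2 I hI 1 le_rfl
  rw [pow_one] at h1
  rw [associatedPrimes_edge_pow hn1 hn2 I hI k hk, h1]
end

section
/- Let d ≥ 1 and n ≥ 2d + 3, let Ḡ be the anti-d-path on vertex set [n] and I = I(Ḡ) = (x_i x_j : i + d < j) its edge ideal in S. Then for every integer k ≥ 2, the set of associated prime ideals of S/I^k equals the set of associated prime ideals of S/I together with the graded maximal ideal (x_1, …, x_n). In particular, the set of associated primes of S/I^k is the same for all k ≥ 2, i.e., I^2 is normally torsion-free. -/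
/-!
Vertices are `0, …, n - 1`, and a *window* is an interval `[i, i + d]` of vertices.  The windows
are the maximal independent sets, so the minimal primes of `I` are the ideals `windowPrime i`
generated by the variables outside a window.  Give every variable outside the window weight `1` and
every other variable weight `0`; the resulting weighted order `ord_i` is a valuation, elements of
`I ^ k` have order at least `k`, and `windowPrime i` consists of the elements of positive order.

The key point (`mul_pow_mem`) is that a monomial `u` with `ord_i u ≥ k` for all `i` satisfies
`u * x_v ^ k ∈ I ^ k` for every vertex `v`.  This is a matching statement, proved by a greedy
induction on `k`: remove from `u * x_v` an edge in such a way that the order remains at least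
`k - 1` for each window containing `v` (`exists_edge`).

If `p = I ^ k : f` is an associated prime different from `(x_0, …, x_{n-1})`, some `x_v` is not in `p`.
Hence `f` cannot have order at least `k` for all windows, so `ord_i f < k` for some `i`.  As
`p f ⊆ I ^ k`, all elements of `p` have positive `ord_i`, i.e. `p ⊆ windowPrime i`, and equality
holds by minimality.  Conversely the ideals `windowPrime i` are minimal over `I ^ k`.

Finally, `0, d + 1, 2d + 2` form a triangle such that each vertex is adjacent to one of the three.
Therefore `x_0 x_{d+1} x_{2d+2} (x_0 x_{d+1}) ^ (k - 2)`, of degree `2k - 1`, is not in `I ^ k`, but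
its product with any variable is.
-/

open MvPolynomial

namespace AntiPath

open Finsupp (weight single)

/-! ### Weighted orders -/

section Order

variable {σ K : Type} [Field K]

/-- The weighted order of a polynomial: the least weight of a monomial in its support. -/
noncomputable def ord (w : σ → ℕ) (f : MvPolynomial σ K) : ℕ∞ :=
  (f : MvPowerSeries σ K).weightedOrder w

lemma le_ord_iff {w : σ → ℕ} {f : MvPolynomial σ K} {c : ℕ} :
    (c : ℕ∞) ≤ ord w f ↔ ∀ m ∈ f.support, c ≤ weight w m := by
  constructor
  · intro h m hm
    have := MvPowerSeries.weightedOrder_le w (f := (f : MvPowerSeries σ K)) (d := m)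
      (by simpa using hm)
    exact_mod_cast h.trans this
  · intro h
    refine MvPowerSeries.nat_le_weightedOrder w fun m hm => ?_
    by_contra hne
    exact absurd (h m (by simpa using hne)) (by omega)

lemma ord_mul (w : σ → ℕ) (f g : MvPolynomial σ K) : ord w (f * g) = ord w f + ord w g := by
  simp [ord, MvPowerSeries.weightedOrder_mul]

lemma ord_X (w : σ → ℕ) (i : σ) : ord w (X i : MvPolynomial σ K) = w i := by
  rw [ord, coe_X, MvPowerSeries.X, MvPowerSeries.weightedOrder_monomial_of_ne_zero _ one_ne_zero]
  simp [Finsupp.weight_single]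

/-- The ideal of polynomials of weighted order at least `c`. -/
noncomputable def orderIdeal (w : σ → ℕ) (c : ℕ) : Ideal (MvPolynomial σ K) where
  carrier := {f | (c : ℕ∞) ≤ ord w f}
  zero_mem' := by simp [ord]
  add_mem' {f g} hf hg := by
    refine le_trans (le_min (Set.mem_ofPred.1 hf) (Set.mem_ofPred.1 hg)) ?_
    simpa [ord] using MvPowerSeries.min_weightedOrder_le_add w
  smul_mem' r f hf := by
    change (c : ℕ∞) ≤ ord w (r * f)
    rw [ord_mul]
    exact le_add_left hf

lemma mem_orderIdeal {w : σ → ℕ} {c : ℕ} {f : MvPolynomial σ K} :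
    f ∈ orderIdeal w c ↔ (c : ℕ∞) ≤ ord w f := Iff.rfl

lemma pow_le_orderIdeal {w : σ → ℕ} {c : ℕ} {I : Ideal (MvPolynomial σ K)}
    (h : I ≤ orderIdeal w c) (k : ℕ) : I ^ k ≤ orderIdeal w (c * k) := by
  induction k with
  | zero => intro f _; simp [mem_orderIdeal]
  | succ k ih =>
    rw [pow_succ, Ideal.mul_le]
    intro f hf g hg
    rw [mem_orderIdeal, ord_mul, mul_add, mul_one, Nat.cast_add]
    exact add_le_add (ih hf) (h hg)

instance orderIdeal_one_isPrime (w : σ → ℕ) :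
    (orderIdeal w 1 : Ideal (MvPolynomial σ K)).IsPrime where
  ne_top' := by
    rw [Ne, Ideal.eq_top_iff_one, mem_orderIdeal]
    simp [ord, MvPowerSeries.weightedOrder_one]
  mem_or_mem' {f g} h := by
    simp only [mem_orderIdeal, ord_mul, Nat.cast_one, Order.one_le_iff_ne_zero] at h ⊢
    by_contra! hc
    exact h (by simp [hc.1, hc.2])

/-- A polynomial of order at least `1` lies in each ideal containing the variables of nonzero
weight. -/
lemma orderIdeal_one_le {w : σ → ℕ} {q : Ideal (MvPolynomial σ K)}
    (h : ∀ j, w j ≠ 0 → X j ∈ q) : orderIdeal w 1 ≤ q := by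
  intro f hf
  have hspan : Ideal.span (X '' {j | w j ≠ 0} : Set (MvPolynomial σ K)) ≤ q := by
    rw [Ideal.span_le]
    rintro _ ⟨j, hj, rfl⟩
    exact h j hj
  refine hspan (mem_ideal_span_X_image.2 fun m hm => ?_)
  have h1 := le_ord_iff.1 hf m hm
  by_contra! hc
  have : weight w m = 0 := by
    rw [Finsupp.weight_apply]
    refine Finset.sum_eq_zero fun j _ => ?_
    by_cases hj : w j = 0
    · simp [hj]
    · simp [hc j hj]
  omega

lemma span_range_X_isMaximal :
    (Ideal.span (Set.range (X : σ → MvPolynomial σ K))).IsMaximal := by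
  have : Ideal.span (Set.range (X : σ → MvPolynomial σ K)) = RingHom.ker constantCoeff := by
    ext f
    rw [← Set.image_univ, mem_ideal_span_X_image, RingHom.mem_ker, constantCoeff_eq]
    constructor
    · intro h
      by_contra hne
      obtain ⟨i, -, hi⟩ := h 0 (by simpa using hne)
      simp at hi
    · intro h m hm
      by_contra! hc
      have : m = 0 := by ext j; simpa using hc j
      subst this
      simp [h] at hm
  rw [this]
  exact RingHom.ker_isMaximal_of_surjective _ fun c => ⟨C c, by simp⟩

end Order

/-! ### Windows and the greedy choice of an edge -/

section Windows

variable {n : ℕ}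

/-- The indicator function of the complement of the window `[i, i + d]`. -/
def outside (n d i : ℕ) (j : Fin n) : ℕ := if i ≤ j ∧ (j : ℕ) ≤ i + d then 0 else 1

lemma outside_le_one (d i : ℕ) (j : Fin n) : outside n d i j ≤ 1 := by
  unfold outside; split_ifs <;> omega

lemma outside_eq_zero {d i : ℕ} {j : Fin n} :
    outside n d i j = 0 ↔ i ≤ j ∧ (j : ℕ) ≤ i + d := by
  unfold outside; split_ifs <;> simp_all

lemma weight_mono_of_support {w w' : Fin n → ℕ} {a : Fin n →₀ ℕ}
    (h : ∀ j, a j ≠ 0 → w j ≤ w' j) : weight w a ≤ weight w' a := by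
  simp only [Finsupp.weight_apply, Finsupp.sum, smul_eq_mul]
  exact Finset.sum_le_sum fun j hj =>
    Nat.mul_le_mul_left _ (h j (by simpa using hj))

/-- Greedy step.  Suppose every window containing `v` misses at least `k + 1` units of `a`.  Then
either some vertex of the support of `a` is adjacent to `v`, or there is an edge `{l, r}` in the
support such that `a - l - r` still has at least `k` units outside every window containing `v`. -/
lemma exists_edge {d k : ℕ} (hn : d < n) (v : Fin n) (a : Fin n →₀ ℕ)
    (ha : ∀ i, i + d < n → i ≤ v → (v : ℕ) ≤ i + d → k + 1 ≤ weight (outside n d i) a) :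
    (∃ j, a j ≠ 0 ∧ ((j : ℕ) + d < v ∨ (v : ℕ) + d < j)) ∨
    ∃ l r, a l ≠ 0 ∧ a r ≠ 0 ∧ (l : ℕ) + d < r ∧
      ∀ i, i + d < n → i ≤ v → (v : ℕ) ≤ i + d →
        k + outside n d i l + outside n d i r ≤ weight (outside n d i) a := by
  by_cases hfar : ∃ j, a j ≠ 0 ∧ ((j : ℕ) + d < v ∨ (v : ℕ) + d < j)
  · exact Or.inl hfar
  right
  push Not at hfar
  -- No window containing `v` contains the whole support.
  have hmiss : ∀ i, i + d < n → i ≤ v → (v : ℕ) ≤ i + d →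
      ∃ j, a j ≠ 0 ∧ ((j : ℕ) < i ∨ i + d < j) := by
    intro i h1 h2 h3
    by_contra! hc
    have h0 : weight (outside n d i) a ≤ weight (0 : Fin n → ℕ) a :=
      weight_mono_of_support fun j hj => (outside_eq_zero.2 (hc j hj)).le
    have h0' : weight (0 : Fin n → ℕ) a = 0 := by simp [Finsupp.weight_apply]
    have := ha i h1 h2 h3
    omega
  -- `r` is the largest vertex of the support.
  obtain ⟨r, hr, hrmax⟩ : ∃ r, a r ≠ 0 ∧ ∀ j, a j ≠ 0 → j ≤ r := by
    have hne : a.support.Nonempty := by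
      obtain ⟨j, hj, -⟩ := hmiss (v - d) (by omega) (by omega) (by omega)
      exact ⟨j, by simpa using hj⟩
    exact ⟨a.support.max' hne, by simpa using a.support.max'_mem hne,
      fun j hj => a.support.le_max' j (by simpa using hj)⟩
  have hrn := r.isLt
  have hfr := hfar r hr
  -- `l` is the largest vertex of the support adjacent to `r`.
  obtain ⟨l, ⟨hl, hlr⟩, hlmax⟩ :
      ∃ l, (a l ≠ 0 ∧ (l : ℕ) + d < r) ∧ ∀ j, a j ≠ 0 → (j : ℕ) + d < r → j ≤ l := by
    have hne : (a.support.filter fun j : Fin n => (j : ℕ) + d < r).Nonempty := by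
      by_cases hrv : r ≤ v
      · obtain ⟨j, hj, hj'⟩ := hmiss (v - d) (by omega) (by omega) (by omega)
        have h1 := hfar j hj
        have h2 := hrmax j hj
        simp only [Fin.le_def] at *
        omega
      · obtain ⟨j, hj, hj'⟩ := hmiss (r - d) (by omega) (by omega) (by omega)
        have h2 := hrmax j hj
        refine ⟨j, Finset.mem_filter.2 ⟨Finsupp.mem_support_iff.2 hj, ?_⟩⟩
        simp only [Fin.le_def] at *
        omega
    refine ⟨Finset.max' _ hne, by simpa using Finset.max'_mem _ hne,
      fun j hj hj' => Finset.le_max' _ j (by simpa using ⟨hj, hj'⟩)⟩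
  refine ⟨l, r, hl, hr, hlr, fun i h1 h2 h3 => ?_⟩
  have hfl := hfar l hl
  have hlr1 := outside_le_one d i l
  have hrr1 := outside_le_one d i r
  by_cases hboth : outside n d i l = 0 ∨ outside n d i r = 0
  · have := ha i h1 h2 h3
    omega
  · push Not at hboth
    have hl' : (l : ℕ) < i := by
      by_contra hc
      exact hboth.1 (outside_eq_zero.2 (by omega))
    have hr' : i + d < r := by
      by_contra hc
      exact hboth.2 (outside_eq_zero.2 (by omega))
    -- The window ending at `r` leaves the same part of the support on its left, nothing on its
    -- right, and it contains `r`, so the window at `i` misses at least one unit more.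
    have hA := ha (r - d) (by omega) (by omega) (by omega)
    have e1 := Finsupp.weight_sub_single_add (w := outside n d i) hr
    have e2 := Finsupp.weight_sub_single_add (w := outside n d (r - d)) hr
    have z : outside n d (r - d) r = 0 := outside_eq_zero.2 (by omega)
    have hmono : weight (outside n d (r - d)) (a - single r 1) ≤
        weight (outside n d i) (a - single r 1) := by
      refine weight_mono_of_support fun j hj => ?_
      have hj : a j ≠ 0 := by
        intro h0; simp [h0] at hj
      have h4 := outside_le_one d (r - d) j
      by_contra! hlt
      have h5 : outside n d i j = 0 := by omega
      have h6 : outside n d (r - d) j ≠ 0 := by omega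
      rw [outside_eq_zero] at h5
      rw [Ne, outside_eq_zero] at h6
      have h7 := hrmax j hj
      have h8 := hlmax j hj
      simp only [Fin.le_def] at *
      omega
    omega

variable {K : Type} [Field K] {d : ℕ}

lemma monomial_split {a : Fin n →₀ ℕ} {j : Fin n} (hj : a j ≠ 0) :
    (monomial a 1 : MvPolynomial (Fin n) K) = X j * monomial (a - single j 1) 1 := by
  rw [X, monomial_mul, add_comm, Finsupp.sub_add_single_one_cancel hj, one_mul]

/-- A monomial of order at least `k` for each window containing `v` lies in `I ^ k` after
multiplication by `x_v ^ k`. -/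
lemma mul_pow_mem {I : Ideal (MvPolynomial (Fin n) K)} (hn : d < n)
    (hI : ∀ i j : Fin n, (i : ℕ) + d < j → X i * X j ∈ I) (v : Fin n) (k : ℕ) :
    ∀ a : Fin n →₀ ℕ,
    (∀ i, i + d < n → i ≤ v → (v : ℕ) ≤ i + d → k ≤ weight (outside n d i) a) →
    monomial a 1 * X v ^ k ∈ I ^ k := by
  induction k with
  | zero => intro a _; simp
  | succ k ih =>
    intro a ha
    rcases exists_edge hn v a ha with ⟨j, hj, hjv⟩ | ⟨l, r, hl, hr, hlr, hW⟩
    · have hmem : X v * X j ∈ I := by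
        rcases hjv with h | h
        · rw [mul_comm]; exact hI _ _ h
        · exact hI _ _ h
      have key := ih (a - single j 1) fun i h1 h2 h3 => by
        have h4 := ha i h1 h2 h3
        have h5 := Finsupp.weight_sub_single_add (w := outside n d i) hj
        have h6 := outside_le_one d i j
        omega
      have : (monomial a 1 * X v ^ (k + 1) : MvPolynomial (Fin n) K) =
          (monomial (a - single j 1) 1 * X v ^ k) * (X v * X j) := by
        rw [monomial_split hj]; ring
      rw [this, pow_succ]
      exact Ideal.mul_mem_mul key hmem
    · have hr2 : (a - single l 1 : Fin n →₀ ℕ) r ≠ 0 := by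
        have : l ≠ r := by rintro rfl; omega
        simpa [Finsupp.single_apply, this] using hr
      have key := ih (a - single l 1 - single r 1) fun i h1 h2 h3 => by
        have h4 := hW i h1 h2 h3
        have h5 := Finsupp.weight_sub_single_add (w := outside n d i) hl
        have h6 := Finsupp.weight_sub_single_add (w := outside n d i) hr2
        omega
      have : (monomial a 1 * X v ^ (k + 1) : MvPolynomial (Fin n) K) =
          X v * ((monomial (a - single l 1 - single r 1) 1 * X v ^ k) * (X l * X r)) := by
        rw [monomial_split hl, monomial_split hr2]; ring
      rw [this, pow_succ]
      exact Ideal.mul_mem_left _ _ (Ideal.mul_mem_mul key (hI _ _ hlr))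

/-! ### Associated primes -/

/-- The prime ideal generated by the variables outside the window `[i, i + d]`, encoded as the
ideal of polynomials all of whose monomials involve such a variable. -/
noncomputable abbrev windowPrime (K : Type) [Field K] (n d i : ℕ) :
    Ideal (MvPolynomial (Fin n) K) :=
  orderIdeal (outside n d i) 1

/-- Every vertex outside a window is adjacent to an end of the window, so `windowPrime i` is
minimal over the edge ideal. -/
lemma windowPrime_le {I q : Ideal (MvPolynomial (Fin n) K)}
    (hI : ∀ i j : Fin n, (i : ℕ) + d < j → X i * X j ∈ I) [q.IsPrime] {i : ℕ} (hi : i + d < n)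
    (hq : I ≤ q) (hqi : q ≤ windowPrime K n d i) : windowPrime K n d i ≤ q := by
  have hnot : ∀ a : Fin n, i ≤ a → (a : ℕ) ≤ i + d → (X a : MvPolynomial (Fin n) K) ∉ q := by
    intro a h1 h2 ha
    have h3 := hqi ha
    rw [mem_orderIdeal, ord_X, outside_eq_zero.2 ⟨h1, h2⟩] at h3
    simp at h3
  refine orderIdeal_one_le fun j hj => ?_
  rw [Ne, outside_eq_zero] at hj
  by_cases hji : (j : ℕ) < i
  · have := hq (hI j ⟨i + d, hi⟩ (by simpa using hji))
    exact (‹q.IsPrime›.mem_or_mem this).resolve_right (hnot _ (by simp) (by simp))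
  · have := hq (hI ⟨i, by omega⟩ j (by simp only; omega))
    exact (‹q.IsPrime›.mem_or_mem this).resolve_left (hnot _ (by simp) (by simp))

lemma edge_le_orderIdeal {I : Ideal (MvPolynomial (Fin n) K)}
    (hI : I = Ideal.span {w : MvPolynomial (Fin n) K |
      ∃ i j : Fin n, (i : ℕ) + d < (j : ℕ) ∧ w = X i * X j}) {w : Fin n → ℕ} {c : ℕ}
    (hw : ∀ i j : Fin n, (i : ℕ) + d < j → c ≤ w i + w j) : I ≤ orderIdeal w c := by
  rw [hI, Ideal.span_le]
  rintro _ ⟨i, j, hij, rfl⟩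
  rw [SetLike.mem_coe, mem_orderIdeal, ord_mul, ord_X, ord_X]
  exact_mod_cast hw i j hij

lemma pow_le_orderIdeal_outside {I : Ideal (MvPolynomial (Fin n) K)}
    (hI : I = Ideal.span {w : MvPolynomial (Fin n) K |
      ∃ i j : Fin n, (i : ℕ) + d < (j : ℕ) ∧ w = X i * X j}) (i k : ℕ) :
    I ^ k ≤ orderIdeal (outside n d i) k := by
  have h : I ≤ orderIdeal (outside n d i) 1 := edge_le_orderIdeal hI fun a b hab => by
    by_contra! hc
    have ha : outside n d i a = 0 := by omega
    have hb : outside n d i b = 0 := by omega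
    rw [outside_eq_zero] at ha hb
    omega
  simpa using pow_le_orderIdeal h k

lemma windowPrime_mem {I : Ideal (MvPolynomial (Fin n) K)}
    (hI : I = Ideal.span {w : MvPolynomial (Fin n) K |
      ∃ i j : Fin n, (i : ℕ) + d < (j : ℕ) ∧ w = X i * X j})
    {i k : ℕ} (hi : i + d < n) (hk : 1 ≤ k) :
    windowPrime K n d i ∈ associatedPrimes (MvPolynomial (Fin n) K)
      (MvPolynomial (Fin n) K ⧸ I ^ k) := by
  apply Module.associatedPrimes.minimalPrimes_annihilator_subset_associatedPrimes
  rw [Ideal.annihilator_quotient]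
  have hle : I ≤ windowPrime K n d i := by
    simpa using pow_le_orderIdeal_outside hI i 1
  refine ⟨⟨inferInstance, (Ideal.pow_le_self (by omega)).trans hle⟩, ?_⟩
  rintro q ⟨hqp, hq⟩ hqi
  exact windowPrime_le (fun i j hij => hI ▸ Ideal.subset_span ⟨i, j, hij, rfl⟩) hi
    (hqp.le_of_pow_le hq) hqi

/-- Membership in an associated prime of `R ⧸ J`, read off in `R`. -/
lemma exists_colon_of_mem {R : Type} [CommRing R] [IsNoetherianRing R] {J p : Ideal R}
    (hp : p ∈ associatedPrimes R (R ⧸ J)) :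
    p.IsPrime ∧ ∃ f : R, ∀ g, g ∈ p ↔ g * f ∈ J := by
  obtain ⟨h1, x, hx⟩ := isAssociatedPrime_iff.1 hp
  obtain ⟨f, rfl⟩ := Ideal.Quotient.mk_surjective x
  refine ⟨h1, f, fun g => ?_⟩
  rw [hx, Submodule.mem_colon_singleton, Submodule.mem_bot, ← Ideal.Quotient.eq_zero_iff_mem,
    map_mul]
  rfl

lemma mem_associatedPrimes_of_colon {R : Type} [CommRing R] [IsNoetherianRing R] {J p : Ideal R}
    (h1 : p.IsPrime) {f : R} (hf : ∀ g, g ∈ p ↔ g * f ∈ J) :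
    p ∈ associatedPrimes R (R ⧸ J) := by
  refine isAssociatedPrime_iff.2 ⟨h1, Ideal.Quotient.mk J f, ?_⟩
  ext g
  rw [hf, Submodule.mem_colon_singleton, Submodule.mem_bot, ← Ideal.Quotient.eq_zero_iff_mem,
    map_mul]
  rfl

/-- If `I ^ k : f` is prime and misses the variable `x_v`, then by `mul_pow_mem` the element `f` has
order less than `k` for some window, which forces `I ^ k : f` to be the corresponding
`windowPrime`. -/
lemma eq_windowPrime_or_eq {I : Ideal (MvPolynomial (Fin n) K)} (hn : d < n)
    (hI : I = Ideal.span {w : MvPolynomial (Fin n) K |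
      ∃ i j : Fin n, (i : ℕ) + d < (j : ℕ) ∧ w = X i * X j})
    {k : ℕ} {p : Ideal (MvPolynomial (Fin n) K)}
    (hp : p ∈ associatedPrimes (MvPolynomial (Fin n) K) (MvPolynomial (Fin n) K ⧸ I ^ k)) :
    (∃ i, i + d < n ∧ p = windowPrime K n d i) ∨
      p = Ideal.span (Set.range (X : Fin n → MvPolynomial (Fin n) K)) := by
  have hE : ∀ i j : Fin n, (i : ℕ) + d < j → (X i * X j : MvPolynomial (Fin n) K) ∈ I :=
    fun i j hij => hI ▸ Ideal.subset_span ⟨i, j, hij, rfl⟩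
  obtain ⟨hprime, f, hf⟩ := exists_colon_of_mem hp
  by_cases hall : ∀ v : Fin n, (X v : MvPolynomial (Fin n) K) ∈ p
  · right
    refine (span_range_X_isMaximal.eq_of_le hprime.ne_top ?_).symm
    rw [Ideal.span_le]
    rintro _ ⟨v, rfl⟩
    exact hall v
  left
  push Not at hall
  obtain ⟨v, hv⟩ := hall
  obtain ⟨i, hi, hord⟩ : ∃ i, i + d < n ∧ f ∉ orderIdeal (outside n d i) k := by
    by_contra! hc
    refine hv (hprime.mem_of_pow_mem k ((hf _).2 ?_))
    rw [f.as_sum, Finset.mul_sum]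
    refine Ideal.sum_mem _ fun m hm => ?_
    have h1 := mul_pow_mem hn hE v k m fun i h1 _ _ => le_ord_iff.1 (hc i h1) m hm
    have h2 : (X v ^ k * monomial m (coeff m f) : MvPolynomial (Fin n) K) =
        C (coeff m f) * (monomial m 1 * X v ^ k) := by
      rw [← mul_assoc, C_mul_monomial, mul_one, mul_comm]
    rw [h2]
    exact Ideal.mul_mem_left _ _ h1
  refine ⟨i, hi, ?_⟩
  have hle : p ≤ windowPrime K n d i := by
    intro g hg
    have h1 := pow_le_orderIdeal_outside hI i k ((hf g).1 hg)
    rw [mem_orderIdeal, ord_mul] at h1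
    rw [mem_orderIdeal] at hord ⊢
    rw [Nat.cast_one, Order.one_le_iff_ne_zero]
    intro h0
    rw [h0, zero_add] at h1
    exact hord h1
  have hIp : I ≤ p := hprime.le_of_pow_le fun g hg => (hf g).2 (Ideal.mul_mem_right _ _ hg)
  exact le_antisymm hle (windowPrime_le hE hi hIp hle)

/-- The witness is `x_0 x_{d+1} x_{2d+2} (x_0 x_{d+1}) ^ (k - 2)`, a triangle times a power of one
of its edges. -/
lemma maximal_mem {I : Ideal (MvPolynomial (Fin n) K)} (hn : 2 * d + 3 ≤ n)
    (hI : I = Ideal.span {w : MvPolynomial (Fin n) K |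
      ∃ i j : Fin n, (i : ℕ) + d < (j : ℕ) ∧ w = X i * X j})
    {k : ℕ} (hk : 2 ≤ k) :
    Ideal.span (Set.range (X : Fin n → MvPolynomial (Fin n) K)) ∈
      associatedPrimes (MvPolynomial (Fin n) K) (MvPolynomial (Fin n) K ⧸ I ^ k) := by
  have hE : ∀ i j : Fin n, (i : ℕ) + d < j → (X i * X j : MvPolynomial (Fin n) K) ∈ I :=
    fun i j hij => hI ▸ Ideal.subset_span ⟨i, j, hij, rfl⟩
  obtain ⟨k, rfl⟩ := Nat.exists_eq_add_of_le' hk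
  let a : Fin n := ⟨0, by omega⟩
  let b : Fin n := ⟨d + 1, by omega⟩
  let c : Fin n := ⟨2 * d + 2, by omega⟩
  let f : MvPolynomial (Fin n) K := X a * X b * X c * (X a * X b) ^ k
  have hab : (X a * X b : MvPolynomial (Fin n) K) ∈ I := hE _ _ (by simp [a, b])
  have hbc : (X b * X c : MvPolynomial (Fin n) K) ∈ I := hE _ _ (by simp only [b, c]; omega)
  have hmax := span_range_X_isMaximal (σ := Fin n) (K := K)
  -- The degree of `f` is `2 * (k + 2) - 1`, too small for membership in `I ^ (k + 2)`.
  have hfI : f ∉ I ^ (k + 2) := by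
    intro hmem
    have h1 : I ≤ orderIdeal (fun _ => 1) 2 := edge_le_orderIdeal hI fun _ _ _ => le_rfl
    have h2 := pow_le_orderIdeal h1 _ hmem
    have hpow : ∀ m : ℕ, ord (fun _ => 1) ((X a * X b : MvPolynomial (Fin n) K) ^ m) =
        ((2 * m : ℕ) : ℕ∞) := by
      intro m
      induction m with
      | zero => simp [ord, MvPowerSeries.weightedOrder_one]
      | succ m ih =>
        rw [pow_succ, ord_mul, ih, ord_mul, ord_X, ord_X]
        norm_cast
    rw [mem_orderIdeal, ord_mul, hpow, ord_mul, ord_mul, ord_X, ord_X, ord_X] at h2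
    norm_cast at h2
    omega
  have hXf : ∀ v : Fin n, X v * f ∈ I ^ (k + 2) := by
    intro v
    have hpk := Ideal.pow_mem_pow hab k
    by_cases hvd : (v : ℕ) ≤ d
    · have hvc : (X v * X c : MvPolynomial (Fin n) K) ∈ I := hE _ _ (by simp only [c]; omega)
      have : X v * f = (X a * X b) ^ k * ((X v * X c) * (X a * X b)) := by simp only [f]; ring
      rw [this, pow_add, pow_two]
      exact Ideal.mul_mem_mul hpk (Ideal.mul_mem_mul hvc hab)
    · have hav : (X a * X v : MvPolynomial (Fin n) K) ∈ I := hE _ _ (by simp only [a]; omega)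
      have : X v * f = (X a * X b) ^ k * ((X a * X v) * (X b * X c)) := by simp only [f]; ring
      rw [this, pow_add, pow_two]
      exact Ideal.mul_mem_mul hpk (Ideal.mul_mem_mul hav hbc)
  let J : Ideal (MvPolynomial (Fin n) K) := Submodule.colon (I ^ (k + 2)) {f}
  have hJ : ∀ g, g ∈ J ↔ g * f ∈ I ^ (k + 2) := fun g => Submodule.mem_colon_singleton
  have hle : Ideal.span (Set.range (X : Fin n → MvPolynomial (Fin n) K)) ≤ J := by
    rw [Ideal.span_le]
    rintro _ ⟨v, rfl⟩
    exact (hJ _).2 (hXf v)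
  have hJtop : J ≠ ⊤ := by
    rw [Ne, Ideal.eq_top_iff_one, hJ, one_mul]
    exact hfI
  have hEq := hmax.eq_of_le hJtop hle
  refine mem_associatedPrimes_of_colon hmax.isPrime (f := f) fun g => ?_
  rw [hEq, hJ]

end Windows

end AntiPath

open AntiPath in
/-- If `n ≥ 2d + 3`, then for the edge ideal `I = (x_i x_j : i + d < j)` of the
anti-`d`-path on `n` vertices and every `k ≥ 2`, the associated primes of `S/I^k`
are exactly the associated primes of `S/I` together with the graded maximal ideal
`(x_1, …, x_n)`.  (In particular the set of associated primes of `S/I^k` is the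
same for all `k ≥ 2`, i.e. `I^2` is normally torsion-free.) -/
theorem stmt_13 {K : Type} [Field K] {n d : ℕ} (hd : 1 ≤ d) (hn : 2 * d + 3 ≤ n)
    (I : Ideal (MvPolynomial (Fin n) K))
    (hI : I = Ideal.span {w : MvPolynomial (Fin n) K |
      ∃ i j : Fin n, (i : ℕ) + d < (j : ℕ) ∧ w = X i * X j})
    (k : ℕ) (hk : 2 ≤ k) :
    associatedPrimes (MvPolynomial (Fin n) K) (MvPolynomial (Fin n) K ⧸ I ^ k) =
      associatedPrimes (MvPolynomial (Fin n) K) (MvPolynomial (Fin n) K ⧸ I) ∪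
        {Ideal.span (Set.range (X : Fin n → MvPolynomial (Fin n) K))} := by
  have hdn : d < n := by omega
  ext p
  constructor
  · intro hp
    rcases eq_windowPrime_or_eq hdn hI hp with ⟨i, hi, rfl⟩ | rfl
    · left
      have h1 := windowPrime_mem hI hi le_rfl
      rwa [pow_one] at h1
    · exact Or.inr rfl
  · rintro (hp | rfl)
    · rw [← pow_one I] at hp
      rcases eq_windowPrime_or_eq hdn hI hp with ⟨i, hi, rfl⟩ | rfl
      · exact windowPrime_mem hI hi (by omega)
      · exact maximal_mem hn hI hk
    · exact maximal_mem hn hI hk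
end

section
/- Let d ≥ 1 and n ≥ 2d + 3, let Ḡ be the anti-d-path on vertex set [n] and I = I(Ḡ) = (x_i x_j : i + d < j) its edge ideal in S. Then for every integer k ≥ 2, the graded maximal ideal m = (x_1, …, x_n) is an associated prime of S/I^k; that is, there exists a monomial w ∉ I^k with I^k : w = m. -/
/-!
With vertices numbered from `0`, put `a = 0`, `b = d + 1`, `c = n - 1`. Since `n ≥ 2d + 3`, these
form a triangle of the anti-`d`-path, and every vertex is adjacent to `a` or to `c`: a vertex
`i > d` to `a`, a vertex `i ≤ d` to `c`. The monomial `w = x_a x_b x_c (x_a x_c)^(k-2)` has degree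
`2k - 1`, so it is not in `I^k`, which is contained in `m^(2k)`. Multiplying by `x_i` produces a
product of `k` edges: `(x_a x_i)(x_b x_c)(x_a x_c)^(k-2)` or `(x_i x_c)(x_a x_b)(x_a x_c)^(k-2)`.
Hence `m ⊆ I^k : w`. Conversely, if `f w ∈ I^k ⊆ m^(2k)`, then the coefficient of `w` in `f w`,
which is the constant term of `f`, vanishes, so `f ∈ m`.
-/

open MvPolynomial

/-- If `n ≥ 2d + 3`, then for the edge ideal `I = (x_i x_j : i + d < j)` of the
anti-`d`-path on `n` vertices and every `k ≥ 2`, the graded maximal ideal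
`(x_1, …, x_n)` is an associated prime of `S/I^k`: there is a monomial `w ∉ I^k`
with `I^k : w = (x_1, …, x_n)`. -/
theorem stmt_14 {K : Type} [Field K] {n d : ℕ} (hd : 1 ≤ d) (hn : 2 * d + 3 ≤ n)
    (I : Ideal (MvPolynomial (Fin n) K))
    (hI : I = Ideal.span {w : MvPolynomial (Fin n) K |
      ∃ i j : Fin n, (i : ℕ) + d < (j : ℕ) ∧ w = X i * X j})
    (k : ℕ) (hk : 2 ≤ k) :
    ∃ e : Fin n →₀ ℕ, monomial e (1 : K) ∉ I ^ k ∧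
      Submodule.colon (I ^ k) (Ideal.span {monomial e (1 : K)}) =
        Ideal.span (Set.range (X : Fin n → MvPolynomial (Fin n) K)) := by
  obtain ⟨t, rfl⟩ := Nat.exists_eq_add_of_le' hk
  have edge : ∀ i j : Fin n, (i : ℕ) + d < (j : ℕ) → (X i * X j : MvPolynomial (Fin n) K) ∈ I := by
    intro i j hij
    rw [hI]
    exact Ideal.subset_span ⟨i, j, hij, rfl⟩
  have hle : I ^ (t + 2) ≤ idealOfVars (Fin n) K ^ (2 * (t + 2)) := by
    rw [pow_mul]
    refine Ideal.pow_right_mono ?_ _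
    rw [hI, Ideal.span_le]
    rintro _ ⟨i, j, -, rfl⟩
    rw [pow_two]
    exact Ideal.mul_mem_mul (Ideal.subset_span ⟨i, rfl⟩) (Ideal.subset_span ⟨j, rfl⟩)
  let a : Fin n := ⟨0, by omega⟩
  let b : Fin n := ⟨d + 1, by omega⟩
  let c : Fin n := ⟨n - 1, by omega⟩
  have hab : (X a * X b : MvPolynomial (Fin n) K) ∈ I := edge _ _ (by simp [a, b])
  have hbc : (X b * X c : MvPolynomial (Fin n) K) ∈ I := edge _ _ (by simp [b, c]; omega)
  have hac : (X a * X c : MvPolynomial (Fin n) K) ∈ I := edge _ _ (by simp [a, c]; omega)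
  let e : Fin n →₀ ℕ := Finsupp.single a 1 + Finsupp.single b 1 + Finsupp.single c 1 +
    t • (Finsupp.single a 1 + Finsupp.single c 1)
  have hw : monomial e (1 : K) = X a * X b * X c * (X a * X c) ^ t := by
    simp only [e, X, monomial_mul, monomial_pow, one_mul, one_pow]
  have hdeg : e.degree < 2 * (t + 2) := by
    simp [e]
    omega
  -- the coefficient of `w` in `f * w` is the constant term of `f`
  have key : ∀ f : MvPolynomial (Fin n) K, f * monomial e 1 ∈ I ^ (t + 2) → coeff 0 f = 0 := by
    intro f hf
    have h := (mem_pow_idealOfVars_iff' _ _).1 (hle hf) e hdeg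
    rw [coeff_mul_monomial'] at h
    simpa using h
  refine ⟨e, fun h => ?_, ?_⟩
  · simpa using key 1 (by simpa using h)
  · rw [Ideal.colon_span]
    apply le_antisymm
    · intro f hf
      rw [Submodule.mem_colon_singleton, smul_eq_mul] at hf
      have h0 := key f hf
      have : f ∈ idealOfVars (Fin n) K ^ 1 := by
        rw [mem_pow_idealOfVars_iff']
        intro x hx
        rw [Nat.lt_one_iff, Finsupp.degree_eq_zero_iff] at hx
        rw [hx, h0]
      simpa using this
    · rw [Ideal.span_le]
      rintro _ ⟨i, rfl⟩
      rw [SetLike.mem_coe, Submodule.mem_colon_singleton, smul_eq_mul, hw]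
      have hprod : ∀ p q : MvPolynomial (Fin n) K, p ∈ I → q ∈ I →
          p * q * (X a * X c) ^ t ∈ I ^ (t + 2) := by
        intro p q hp hq
        rw [add_comm t 2, pow_add, pow_two]
        exact Ideal.mul_mem_mul (Ideal.mul_mem_mul hp hq) (Ideal.pow_mem_pow hac t)
      by_cases hi : d < (i : ℕ)
      · convert hprod _ _ (edge a i (by simpa [a] using hi)) hbc using 1
        ring
      · convert hprod _ _ (edge i c (by simp [c]; omega)) hab using 1
        ring
end
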